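/- arXiv:1410.6222 — 13 statements merged into one kernel-verified Lean document; each statement's English description precedes it below -/
import Mathlib

section
/- Let X and Y be real normed spaces, X_m ⊆ X a finite-dimensional subspace, and D ⊆ X a closed convex set such that D_m := D ∩ X_m is nonempty. Let F : X → Y be continuous, y^δ ∈ Y, p ∈ [1, ∞), α > 0, and let f : X → ℝ be nonnegative, lower semicontinuous and coercive. Then the Tikhonov functional T_α(x) = ‖F(x) − y^δ‖^p + α f(x) attains its minimum over D_m: there exists x* ∈ D_m such that T_α(x*) ≤ T_α(x) for all x ∈ D_m. -/
open Filter Topology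

/-- Existence of Tikhonov minimizers on a finite-dimensional discretized domain. -/
theorem stmt_1 {X Y : Type*} [NormedAddCommGroup X] [NormedSpace ℝ X]
    [NormedAddCommGroup Y] [NormedSpace ℝ Y]
    (Xm : Subspace ℝ X) [FiniteDimensional ℝ Xm]
    (D : Set X) (hDclosed : IsClosed D) (hDconv : Convex ℝ D)
    (hne : (D ∩ (Xm : Set X)).Nonempty)
    (F : X → Y) (hF : Continuous F) (yδ : Y)
    (p : ℝ) (hp : 1 ≤ p)
    (α : ℝ) (hα : 0 < α)
    (f : X → ℝ) (hf0 : ∀ x, 0 ≤ f x) (hflsc : LowerSemicontinuous f)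
    (hfcoer : ∀ C : ℝ, Bornology.IsBounded {x : X | f x ≤ C}) :
    ∃ xs ∈ D ∩ (Xm : Set X), ∀ x ∈ D ∩ (Xm : Set X),
      ‖F xs - yδ‖ ^ p + α * f xs ≤ ‖F x - yδ‖ ^ p + α * f x := by
  obtain ⟨x0, hx0D, hx0m⟩ := hne
  have hT : LowerSemicontinuous (fun x : X => ‖F x - yδ‖ ^ p + α * f x) := by
    have h1 : Continuous (fun x : X => ‖F x - yδ‖ ^ p) :=
      (hF.sub continuous_const).norm.rpow_const (fun _ => Or.inr (by linarith))
    have h2 : LowerSemicontinuous (fun x : X => α * f x) :=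
      (continuous_const.mul continuous_id : Continuous (fun t : ℝ => α * t)).comp_lowerSemicontinuous
        hflsc (fun a b h => mul_le_mul_of_nonneg_left h hα.le)
    exact h1.lowerSemicontinuous.add h2
  set C : ℝ := ‖F x0 - yδ‖ ^ p + α * f x0 with hC
  let K : Set Xm := {x : Xm | (x : X) ∈ D ∧ ‖F (x : X) - yδ‖ ^ p + α * f x ≤ C}
  have hKc : IsClosed K :=
    (hDclosed.preimage continuous_subtype_val).inter
      ((hT.isClosed_preimage C).preimage continuous_subtype_val)
  have hKb : Bornology.IsBounded K := by
    obtain ⟨R, hR⟩ := (hfcoer (C / α)).exists_norm_le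
    refine isBounded_iff_forall_norm_le.2 ⟨R, fun x hx => hR x ?_⟩
    have h0 : 0 ≤ ‖F (x : X) - yδ‖ ^ p := by positivity
    have h1 := hx.2
    change f x ≤ C / α
    rw [le_div_iff₀ hα]
    linarith
  have : ProperSpace Xm := FiniteDimensional.proper ℝ Xm
  have hK : IsCompact K := Metric.isCompact_of_isClosed_isBounded hKc hKb
  have hx0K : (⟨x0, hx0m⟩ : Xm) ∈ K := ⟨hx0D, le_refl C⟩
  obtain ⟨xs, hxs, hmin⟩ := LowerSemicontinuousOn.exists_isMinOn ⟨_, hx0K⟩ hK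
    ((hT.comp (g := fun x : Xm => (x : X)) continuous_subtype_val).lowerSemicontinuousOn K)
  refine ⟨xs, ⟨hxs.1, xs.2⟩, fun x hx => ?_⟩
  by_cases h : ‖F x - yδ‖ ^ p + α * f x ≤ C
  · exact hmin (show (⟨x, hx.2⟩ : Xm) ∈ K from ⟨hx.1, h⟩)
  · exact hxs.2.trans (not_le.1 h).le
end

section
/- Let X and Y be real normed spaces, X_m ⊆ X a finite-dimensional subspace, D ⊆ X closed convex with D_m := D ∩ X_m nonempty, F : X → Y continuous, p ∈ [1, ∞), α > 0, and f : X → ℝ nonnegative, lower semicontinuous and coercive. Let y^δ ∈ Y and let (y_k)_{k∈ℕ} ⊆ Y with ‖y_k − y^δ‖ → 0. For each k let x_k ∈ D_m be a minimizer over D_m of x ↦ ‖F(x) − y_k‖^p + α f(x). Then there exist a subsequence (x_{k_l}) and x̃ ∈ D_m such that x_{k_l} converges weakly to x̃, x̃ minimizes x ↦ ‖F(x) − y^δ‖^p + α f(x) over D_m, and f(x_{k_l}) → f(x̃). -/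
open Filter Topology

/-- Weak convergence of a sequence in a normed space: convergence against every
continuous linear functional. -/
def WeakTendsto {E : Type*} [NormedAddCommGroup E] [NormedSpace ℝ E]
    (u : ℕ → E) (x : E) : Prop :=
  ∀ φ : E →L[ℝ] ℝ, Filter.Tendsto (fun n => φ (u n)) Filter.atTop (nhds (φ x))

/-- Stability of Tikhonov minimizers on a finite-dimensional discretized domain:
if the data `y_k` converge to `y^δ`, then a subsequence of the corresponding minimizers
converges weakly to a minimizer for the data `y^δ`, together with convergence of the
penalty values. -/
theorem stmt_2 {X Y : Type*} [NormedAddCommGroup X] [NormedSpace ℝ X]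
    [NormedAddCommGroup Y] [NormedSpace ℝ Y]
    (Xm : Subspace ℝ X) [FiniteDimensional ℝ Xm]
    (D : Set X) (hDclosed : IsClosed D) (hDconv : Convex ℝ D)
    (hne : (D ∩ (Xm : Set X)).Nonempty)
    (F : X → Y) (hF : Continuous F)
    (p : ℝ) (hp : 1 ≤ p)
    (α : ℝ) (hα : 0 < α)
    (f : X → ℝ) (hf0 : ∀ x, 0 ≤ f x) (hflsc : LowerSemicontinuous f)
    (hfcoer : ∀ C : ℝ, Bornology.IsBounded {x : X | f x ≤ C})
    (yδ : Y) (yk : ℕ → Y)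
    (hyk : Tendsto (fun k => ‖yk k - yδ‖) atTop (𝓝 0))
    (x : ℕ → X)
    (hx : ∀ k, x k ∈ D ∩ (Xm : Set X) ∧ ∀ v ∈ D ∩ (Xm : Set X),
      ‖F (x k) - yk k‖ ^ p + α * f (x k) ≤ ‖F v - yk k‖ ^ p + α * f v) :
    ∃ (φ : ℕ → ℕ), StrictMono φ ∧ ∃ xt ∈ D ∩ (Xm : Set X),
      WeakTendsto (fun l => x (φ l)) xt ∧
      (∀ v ∈ D ∩ (Xm : Set X),
        ‖F xt - yδ‖ ^ p + α * f xt ≤ ‖F v - yδ‖ ^ p + α * f v) ∧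
      Tendsto (fun l => f (x (φ l))) atTop (𝓝 (f xt)) := by
  have hy : Tendsto yk atTop (𝓝 yδ) := tendsto_iff_norm_sub_tendsto_zero.2 hyk
  have hp0 : 0 ≤ p := by linarith
  have hJ : ∀ v, Tendsto (fun k => ‖F v - yk k‖ ^ p + α * f v) atTop
      (𝓝 (‖F v - yδ‖ ^ p + α * f v)) := fun v =>
    (((tendsto_const_nhds.sub hy).norm).rpow_const (Or.inr hp0)).add tendsto_const_nhds
  obtain ⟨v0, hv0⟩ := hne
  obtain ⟨C, hC⟩ := (hJ v0).bddAbove_range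
  have hbd : ∀ k, f (x k) ≤ C / α := by
    intro k
    have h1 := (hx k).2 v0 hv0
    have h2 : ‖F v0 - yk k‖ ^ p + α * f v0 ≤ C := hC ⟨k, rfl⟩
    have h3 : 0 ≤ ‖F (x k) - yk k‖ ^ p := Real.rpow_nonneg (norm_nonneg _) _
    rw [le_div_iff₀ hα]
    linarith
  haveI : ProperSpace Xm := FiniteDimensional.proper ℝ Xm
  let z : ℕ → Xm := fun k => ⟨x k, (hx k).1.2⟩
  obtain ⟨R, hR⟩ := (hfcoer (C / α)).exists_norm_le
  have hz : ∀ k, z k ∈ Metric.closedBall (0 : Xm) R := by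
    intro k
    rw [mem_closedBall_zero_iff]
    exact hR (x k) (hbd k)
  obtain ⟨zt, -, φ, hφ, hlim⟩ := (isCompact_closedBall (0 : Xm) R).tendsto_subseq hz
  have hxl : Tendsto (fun l => x (φ l)) atTop (𝓝 (zt : X)) :=
    (continuous_subtype_val.tendsto zt).comp hlim
  have hmem : (zt : X) ∈ D ∩ (Xm : Set X) :=
    ⟨hDclosed.mem_of_tendsto hxl (Eventually.of_forall fun l => (hx (φ l)).1.1), zt.2⟩
  have hyφ := hy.comp hφ.tendsto_atTop
  have hres : Tendsto (fun l => ‖F (x (φ l)) - yk (φ l)‖ ^ p) atTop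
      (𝓝 (‖F zt - yδ‖ ^ p)) :=
    (((hF.tendsto (zt : X)).comp hxl).sub hyφ).norm.rpow_const (Or.inr hp0)
  have hup : Tendsto (fun l => ((‖F zt - yk (φ l)‖ ^ p + α * f zt)
      - ‖F (x (φ l)) - yk (φ l)‖ ^ p) / α) atTop (𝓝 (f zt)) := by
    have h := (((hJ zt).comp hφ.tendsto_atTop).sub hres).div_const α
    have e : (‖F zt - yδ‖ ^ p + α * f zt - ‖F zt - yδ‖ ^ p) / α = f zt := by
      field_simp
      ring
    rw [e] at h
    exact h
  have hf : Tendsto (fun l => f (x (φ l))) atTop (𝓝 (f zt)) := by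
    rw [tendsto_order]
    constructor
    · intro a ha
      exact hxl.eventually (hflsc zt a ha)
    · intro a ha
      filter_upwards [hup.eventually_lt_const ha] with l hl
      refine lt_of_le_of_lt ?_ hl
      rw [le_div_iff₀ hα]
      have := (hx (φ l)).2 zt hmem
      linarith
  refine ⟨φ, hφ, zt, hmem, fun ψ => (ψ.continuous.tendsto _).comp hxl, ?_, hf⟩
  intro v hv
  exact le_of_tendsto_of_tendsto' (hres.add (hf.const_mul α))
    ((hJ v).comp hφ.tendsto_atTop) (fun l => (hx (φ l)).2 v hv)
end

section
/- Let X and Y be real normed spaces, D ⊆ X convex, F : X → Y a map, f : X → ℝ nonnegative, and p ∈ [1, ∞). Assume: f is coercive and weakly sequentially lower semicontinuous; F is weakly sequentially continuous on D; and every bounded sequence in D has a subsequence converging weakly to a point of D. Let y ∈ Y and let x† ∈ D be an f-minimizing solution of F(x) = y. Let δ_k > 0 with δ_k → 0, y_k ∈ Y with ‖y − y_k‖ ≤ δ_k, let D_k ⊆ D be sets each containing a point z_k such that f(z_k) → f(x†) and γ_k := ‖F(x†) − F(z_k)‖ → 0, and let α_k > 0 satisfy α_k → 0 and (δ_k + γ_k)^p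 / α_k → 0. If x_k minimizes x ↦ ‖F(x) − y_k‖^p + α_k f(x) over D_k for each k, then (x_k) has a subsequence (x_{k_l}) converging weakly to some x̃ ∈ D which is an f-minimizing solution of F(x) = y, and f(x_{k_l}) → f(x̃). -/
open Filter Topology

/-- Convergence of discretized Tikhonov minimizers to an `f`-minimizing solution
under the a priori parameter choice `α_k → 0`, `(δ_k + γ_k)^p / α_k → 0`. -/
theorem stmt_3 {X Y : Type*} [NormedAddCommGroup X] [NormedSpace ℝ X]
    [NormedAddCommGroup Y] [NormedSpace ℝ Y]
    (D : Set X) (hDconv : Convex ℝ D)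
    (F : X → Y) (f : X → ℝ) (p : ℝ) (hp : 1 ≤ p)
    (hf0 : ∀ x, 0 ≤ f x)
    (hfcoer : ∀ C : ℝ, Bornology.IsBounded {x : X | f x ≤ C})
    (hfwlsc : ∀ (u : ℕ → X) (x : X), WeakTendsto u x →
      f x ≤ Filter.liminf (fun k => f (u k)) atTop)
    (hFwc : ∀ (u : ℕ → X) (x : X), (∀ k, u k ∈ D) → x ∈ D → WeakTendsto u x →
      WeakTendsto (fun k => F (u k)) (F x))
    (hcpt : ∀ (u : ℕ → X), (∀ k, u k ∈ D) → Bornology.IsBounded (Set.range u) →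
      ∃ (φ : ℕ → ℕ) (x : X), StrictMono φ ∧ x ∈ D ∧ WeakTendsto (fun l => u (φ l)) x)
    (y : Y) (xdag : X) (hxdagD : xdag ∈ D) (hxdagsol : F xdag = y)
    (hxdagmin : ∀ v ∈ D, F v = y → f xdag ≤ f v)
    (δ : ℕ → ℝ) (hδpos : ∀ k, 0 < δ k) (hδ0 : Tendsto δ atTop (𝓝 0))
    (yk : ℕ → Y) (hyk : ∀ k, ‖y - yk k‖ ≤ δ k)
    (Dk : ℕ → Set X) (hDk : ∀ k, Dk k ⊆ D)
    (z : ℕ → X) (hz : ∀ k, z k ∈ Dk k)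
    (hfz : Tendsto (fun k => f (z k)) atTop (𝓝 (f xdag)))
    (γ : ℕ → ℝ) (hγ : ∀ k, γ k = ‖F xdag - F (z k)‖)
    (hγ0 : Tendsto γ atTop (𝓝 0))
    (α : ℕ → ℝ) (hαpos : ∀ k, 0 < α k) (hα0 : Tendsto α atTop (𝓝 0))
    (hratio : Tendsto (fun k => (δ k + γ k) ^ p / α k) atTop (𝓝 0))
    (x : ℕ → X)
    (hx : ∀ k, x k ∈ Dk k ∧ ∀ v ∈ Dk k,
      ‖F (x k) - yk k‖ ^ p + α k * f (x k) ≤ ‖F v - yk k‖ ^ p + α k * f v) :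
    ∃ (φ : ℕ → ℕ), StrictMono φ ∧ ∃ xt ∈ D,
      WeakTendsto (fun l => x (φ l)) xt ∧ F xt = y ∧
      (∀ v ∈ D, F v = y → f xt ≤ f v) ∧
      Tendsto (fun l => f (x (φ l))) atTop (𝓝 (f xt)) := by
  have hp0 : 0 < p := by linarith
  have hγn : ∀ k, 0 ≤ γ k := fun k => by rw [hγ]; exact norm_nonneg _
  have hzb : ∀ k, ‖F (z k) - yk k‖ ≤ δ k + γ k := by
    intro k
    have h1 : F (z k) - yk k = (y - yk k) - (F xdag - F (z k)) := by rw [hxdagsol]; abel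
    rw [h1, hγ k]
    exact (norm_sub_le _ _).trans (by linarith [hyk k])
  have hkey : ∀ k, ‖F (x k) - yk k‖ ^ p + α k * f (x k) ≤ (δ k + γ k) ^ p + α k * f (z k) := by
    intro k
    have h1 := (hx k).2 (z k) (hz k)
    have h2 := Real.rpow_le_rpow (norm_nonneg _) (hzb k) hp0.le
    linarith
  have hfa : ∀ k, f (x k) ≤ (δ k + γ k) ^ p / α k + f (z k) := by
    intro k
    have h1 := hkey k
    have h2 : 0 ≤ ‖F (x k) - yk k‖ ^ p := Real.rpow_nonneg (norm_nonneg _) _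
    have h3 : (δ k + γ k) ^ p / α k + f (z k) = ((δ k + γ k) ^ p + α k * f (z k)) / α k := by
      have := (hαpos k).ne'
      field_simp
    rw [h3, le_div_iff₀ (hαpos k)]
    linarith
  have ha : Tendsto (fun k => (δ k + γ k) ^ p / α k + f (z k)) atTop (𝓝 (f xdag)) := by
    simpa using hratio.add hfz
  have hpow : Tendsto (fun k => ‖F (x k) - yk k‖ ^ p) atTop (𝓝 0) := by
    have hb : Tendsto (fun k => (δ k + γ k) ^ p + α k * f (z k)) atTop (𝓝 0) := by
      have h1 : Tendsto (fun k => (δ k + γ k) ^ p) atTop (𝓝 0) := by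
        have := (hδ0.add hγ0).rpow_const (p := p) (Or.inr hp0.le)
        simpa [Real.zero_rpow hp0.ne'] using this
      simpa using h1.add (hα0.mul hfz)
    refine squeeze_zero (fun k => Real.rpow_nonneg (norm_nonneg _) _) (fun k => ?_) hb
    have := mul_nonneg (hαpos k).le (hf0 (x k))
    linarith [hkey k]
  have hnorm : Tendsto (fun k => ‖F (x k) - yk k‖) atTop (𝓝 0) := by
    have h := hpow.rpow_const (p := p⁻¹) (Or.inr (inv_nonneg.2 hp0.le))
    rw [Real.zero_rpow (inv_ne_zero hp0.ne')] at h
    refine h.congr fun k => ?_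
    exact Real.rpow_rpow_inv (norm_nonneg _) hp0.ne'
  have hFx : Tendsto (fun k => F (x k)) atTop (𝓝 y) := by
    rw [tendsto_iff_norm_sub_tendsto_zero]
    refine squeeze_zero (fun k => norm_nonneg _) (fun k => ?_) (by simpa using hnorm.add hδ0)
    have h1 : F (x k) - y = (F (x k) - yk k) - (y - yk k) := by abel
    rw [h1]
    exact (norm_sub_le _ _).trans (by linarith [hyk k])
  obtain ⟨C, hC⟩ := ha.bddAbove_range
  have hxD : ∀ k, x k ∈ D := fun k => hDk k (hx k).1
  have hfC : ∀ k, f (x k) ≤ C := fun k => (hfa k).trans (hC ⟨k, rfl⟩)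
  obtain ⟨φ, xt, hφ, hxtD, hw⟩ := hcpt x hxD
    ((hfcoer C).subset (by rintro _ ⟨k, rfl⟩; exact hfC k))
  have hFxt : F xt = y := by
    have h1 := hFwc _ xt (fun l => hxD (φ l)) hxtD hw
    by_contra hne
    obtain ⟨g, hg⟩ := SeparatingDual.exists_separating_of_ne (R := ℝ) hne
    exact hg (tendsto_nhds_unique (h1 g)
      ((g.continuous.tendsto y).comp (hFx.comp hφ.tendsto_atTop)))
  have haφ := ha.comp hφ.tendsto_atTop
  have hba : IsBoundedUnder (· ≤ ·) atTop (fun l => f (x (φ l))) :=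
    isBoundedUnder_of ⟨C, fun l => hfC _⟩
  have hbb : IsBoundedUnder (· ≥ ·) atTop (fun l => f (x (φ l))) :=
    isBoundedUnder_of ⟨0, fun l => hf0 _⟩
  have hls : limsup (fun l => f (x (φ l))) atTop ≤ f xdag := by
    rw [← haφ.limsup_eq]
    exact limsup_le_limsup (Eventually.of_forall fun l => hfa (φ l))
      hbb.isCoboundedUnder_le haφ.isBoundedUnder_le
  have hli := hfwlsc _ xt hw
  have hll : liminf (fun l => f (x (φ l))) atTop ≤ limsup (fun l => f (x (φ l))) atTop :=
    liminf_le_limsup hba hbb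
  have hmin := hxdagmin xt hxtD hFxt
  exact ⟨φ, hφ, xt, hxtD, hw, hFxt,
    fun v hv hFv => (hli.trans (hll.trans hls)).trans (hxdagmin v hv hFv),
    tendsto_of_le_liminf_of_limsup_le hli (hls.trans hmin) hba hbb⟩
end

section
/- Let S be a set and let G : S → ℝ and f : S → ℝ be nonnegative functions. For each α > 0 set I(α) := inf_{x ∈ S} (G(x) + α f(x)) and M_α := {x ∈ S : G(x) + α f(x) = I(α)}, and assume M_α ≠ ∅ for every α > 0. Then: (i) the function I : (0, ∞) → ℝ is continuous; (ii) the sets M := {α > 0 : inf_{x ∈ M_α} G(x) < sup_{x ∈ M_α} G(x)} and N := {α > 0 : inf_{x ∈ M_α} f(x) < sup_{x ∈ M_α} f(x)} coincide and are countable. -/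
/-- The value function `I(α) = inf_{x ∈ S} (G x + α f x)` of a Tikhonov-type
minimization. -/
noncomputable def Ival {S : Type*} (G f : S → ℝ) (α : ℝ) : ℝ :=
  ⨅ x : S, (G x + α * f x)

/-- The set of minimizers of `G + α f` over `S`. -/
def Mmin {S : Type*} (G f : S → ℝ) (α : ℝ) : Set S :=
  {x | G x + α * f x = Ival G f α}

theorem Ival_le_aux {S : Type*} (G f : S → ℝ)
    (hG : ∀ x, 0 ≤ G x) (hf : ∀ x, 0 ≤ f x) {α : ℝ} (hα : 0 < α) (x : S) :
    Ival G f α ≤ G x + α * f x := by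
  refine ciInf_le (f := fun x => G x + α * f x) ⟨0, ?_⟩ x
  rintro _ ⟨y, rfl⟩
  have := mul_nonneg hα.le (hf y)
  have := hG y
  simp only
  linarith

theorem sInf_lt_sSup_aux {S : Type*} (g : S → ℝ) (M : Set S) (hM : M.Nonempty) (B : ℝ)
    (h0 : ∀ x, 0 ≤ g x) (hB : ∀ x ∈ M, g x ≤ B) :
    sInf (g '' M) < sSup (g '' M) ↔ ∃ x ∈ M, ∃ y ∈ M, g x < g y := by
  have hb : BddBelow (g '' M) := ⟨0, by rintro _ ⟨x, _, rfl⟩; exact h0 x⟩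
  have ha : BddAbove (g '' M) := ⟨B, by rintro _ ⟨x, hx, rfl⟩; exact hB x hx⟩
  constructor
  · intro h
    obtain ⟨_, ⟨y, hy, rfl⟩, h1⟩ := exists_lt_of_lt_csSup (hM.image g) h
    obtain ⟨_, ⟨x, hx, rfl⟩, h2⟩ := exists_lt_of_csInf_lt (hM.image g) h1
    exact ⟨x, hx, y, hy, h2⟩
  · rintro ⟨x, hx, y, hy, h⟩
    exact (csInf_le hb ⟨x, hx, rfl⟩).trans_lt (h.trans_le (le_csSup ha ⟨y, hy, rfl⟩))

/-- The value function `I` is continuous on `(0, ∞)`, and the sets of parameters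
at which the residual `G`, respectively the penalty `f`, is not single-valued on
the minimizer set coincide and are countable. -/
theorem stmt_5 {S : Type*} (G f : S → ℝ)
    (hG : ∀ x, 0 ≤ G x) (hf : ∀ x, 0 ≤ f x)
    (hne : ∀ α : ℝ, 0 < α → (Mmin G f α).Nonempty) :
    ContinuousOn (Ival G f) (Set.Ioi 0) ∧
    {α : ℝ | 0 < α ∧ sInf (G '' Mmin G f α) < sSup (G '' Mmin G f α)} =
      {α : ℝ | 0 < α ∧ sInf (f '' Mmin G f α) < sSup (f '' Mmin G f α)} ∧
    Set.Countable
      {α : ℝ | 0 < α ∧ sInf (G '' Mmin G f α) < sSup (G '' Mmin G f α)} := by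
  have hle : ∀ {α : ℝ}, 0 < α → ∀ x, Ival G f α ≤ G x + α * f x :=
    fun hα x => Ival_le_aux G f hG hf hα x
  have keyG : ∀ α : ℝ, 0 < α → (sInf (G '' Mmin G f α) < sSup (G '' Mmin G f α) ↔
      ∃ x ∈ Mmin G f α, ∃ y ∈ Mmin G f α, G x < G y) := by
    intro α hα
    refine sInf_lt_sSup_aux G _ (hne α hα) (Ival G f α) hG fun x hx => ?_
    have hx' : G x + α * f x = Ival G f α := hx
    have := mul_nonneg hα.le (hf x)
    linarith
  have keyf : ∀ α : ℝ, 0 < α → (sInf (f '' Mmin G f α) < sSup (f '' Mmin G f α) ↔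
      ∃ x ∈ Mmin G f α, ∃ y ∈ Mmin G f α, f x < f y) := by
    intro α hα
    refine sInf_lt_sSup_aux f _ (hne α hα) (Ival G f α / α) hf fun x hx => ?_
    have hx' : G x + α * f x = Ival G f α := hx
    rw [le_div_iff₀ hα]
    have := hG x
    linarith
  have heq : {α : ℝ | 0 < α ∧ sInf (G '' Mmin G f α) < sSup (G '' Mmin G f α)} =
      {α : ℝ | 0 < α ∧ sInf (f '' Mmin G f α) < sSup (f '' Mmin G f α)} := by
    ext α
    refine and_congr_right fun hα => ?_
    rw [keyG α hα, keyf α hα]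
    constructor
    · rintro ⟨x, hx, y, hy, h⟩
      refine ⟨y, hy, x, hx, ?_⟩
      have hx' : G x + α * f x = Ival G f α := hx
      have hy' : G y + α * f y = Ival G f α := hy
      exact lt_of_mul_lt_mul_left (by linarith) hα.le
    · rintro ⟨x, hx, y, hy, h⟩
      refine ⟨y, hy, x, hx, ?_⟩
      have hx' : G x + α * f x = Ival G f α := hx
      have hy' : G y + α * f y = Ival G f α := hy
      have := mul_lt_mul_of_pos_left h hα
      linarith
  have hanti : ∀ a b : ℝ, 0 < a → a < b → ∀ x ∈ Mmin G f a, ∀ y ∈ Mmin G f b, f y ≤ f x := by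
    intro a b ha hab x hx y hy
    have hx' : G x + a * f x = Ival G f a := hx
    have hy' : G y + b * f y = Ival G f b := hy
    have h1 := hle ha y
    have h2 := hle (ha.trans hab) x
    refine le_of_mul_le_mul_left (a := b - a) ?_ (by linarith)
    linarith
  refine ⟨?_, heq, ?_⟩
  · refine ConcaveOn.continuousOn isOpen_Ioi ⟨convex_Ioi 0, ?_⟩
    intro a ha b hb s t hs ht hst
    have hpos : 0 < s • a + t • b := (convex_Ioi (0:ℝ)) ha hb hs ht hst
    obtain ⟨x, hx⟩ := hne _ hpos
    have hx' : G x + (s • a + t • b) * f x = Ival G f (s • a + t • b) := hx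
    rw [← hx']
    have h1 := mul_le_mul_of_nonneg_left (hle ha x) hs
    have h2 := mul_le_mul_of_nonneg_left (hle hb x) ht
    simp only [smul_eq_mul]
    have h3 : G x = s * G x + t * G x := by rw [← add_mul, hst, one_mul]
    linarith
  · rw [heq]
    have hex : ∀ α : ℝ, ∃ p : S × S,
        α ∈ {α : ℝ | 0 < α ∧ sInf (f '' Mmin G f α) < sSup (f '' Mmin G f α)} →
        p.1 ∈ Mmin G f α ∧ p.2 ∈ Mmin G f α ∧ f p.1 < f p.2 := by
      intro α
      obtain ⟨z, _⟩ := hne 1 one_pos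
      by_cases h : α ∈ {α : ℝ | 0 < α ∧ sInf (f '' Mmin G f α) < sSup (f '' Mmin G f α)}
      · obtain ⟨x, hx, y, hy, hxy⟩ := (keyf α h.1).1 h.2
        exact ⟨(x, y), fun _ => ⟨hx, hy, hxy⟩⟩
      · exact ⟨(z, z), fun h' => absurd h' h⟩
    choose p hp using hex
    refine Set.PairwiseDisjoint.countable_of_isOpen
      (s := fun α => Set.Ioo (f (p α).1) (f (p α).2)) ?_ (fun _ _ => isOpen_Ioo)
      (fun α hα => Set.nonempty_Ioo.2 (hp α hα).2.2)
    intro a ha b hb hab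
    refine Set.disjoint_left.2 ?_
    rintro r ⟨h1, h2⟩ ⟨h3, h4⟩
    rcases lt_or_gt_of_ne hab with h | h
    · have := hanti a b ha.1 h _ (hp a ha).1 _ (hp b hb).2.1
      linarith
    · have := hanti b a hb.1 h _ (hp b hb).1 _ (hp a ha).2.1
      linarith
end

section
/- Let X be a finite-dimensional real normed space, Y a real normed space, D ⊆ X nonempty, closed and convex, F : X → Y continuous, y^δ ∈ Y, and p ∈ [1, ∞). Let f : X → ℝ be nonnegative, convex, lower semicontinuous and coercive, and let x₀ ∈ D be such that f(x) = 0 if and only if x = x₀. Assume that for every α > 0 the Tikhonov functional T_α(x) = ‖F(x) − y^δ‖^p + α f(x) has at least one minimizer over D. Let 1 < τ₁ ≤ τ₂ and c > 0, suppose there exists z ∈ D with ‖F(z) − y^δ‖ ≤ c, and suppose ‖F(x₀) − y^δ‖ > τ₂ c. Then there exist α₁ > 0 and a minimizer x₁ of T_{α₁} over D with ‖F(x₁) − y^δ‖ < τ₁ c, and there exist α₂ > 0 and a minimizer x₂ of T_{α₂} over D with ‖F(x₂) − y^δ‖ > τ₂ c. -/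
/-- For small `α` the residual of Tikhonov minimizers drops below `τ₁ c`, while for
large `α` it exceeds `τ₂ c`. -/
theorem stmt_7 {X Y : Type*} [NormedAddCommGroup X] [NormedSpace ℝ X]
    [FiniteDimensional ℝ X]
    [NormedAddCommGroup Y] [NormedSpace ℝ Y]
    (D : Set X) (hDne : D.Nonempty) (hDclosed : IsClosed D) (hDconv : Convex ℝ D)
    (F : X → Y) (hF : Continuous F) (yδ : Y)
    (p : ℝ) (hp : 1 ≤ p)
    (f : X → ℝ) (hf0 : ∀ x, 0 ≤ f x) (hfconv : ConvexOn ℝ Set.univ f)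
    (hflsc : LowerSemicontinuous f)
    (hfcoer : ∀ C : ℝ, Bornology.IsBounded {x : X | f x ≤ C})
    (x₀ : X) (hx₀D : x₀ ∈ D) (hx₀ : ∀ x, f x = 0 ↔ x = x₀)
    (hmin : ∀ α : ℝ, 0 < α → ∃ x ∈ D, ∀ v ∈ D,
      ‖F x - yδ‖ ^ p + α * f x ≤ ‖F v - yδ‖ ^ p + α * f v)
    (τ₁ τ₂ : ℝ) (hτ₁ : 1 < τ₁) (hτ₁₂ : τ₁ ≤ τ₂)
    (c : ℝ) (hc : 0 < c)
    (z : X) (hzD : z ∈ D) (hz : ‖F z - yδ‖ ≤ c)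
    (hx₀res : τ₂ * c < ‖F x₀ - yδ‖) :
    (∃ α₁ : ℝ, 0 < α₁ ∧ ∃ x₁ ∈ D,
      (∀ v ∈ D, ‖F x₁ - yδ‖ ^ p + α₁ * f x₁ ≤ ‖F v - yδ‖ ^ p + α₁ * f v) ∧
      ‖F x₁ - yδ‖ < τ₁ * c) ∧
    (∃ α₂ : ℝ, 0 < α₂ ∧ ∃ x₂ ∈ D,
      (∀ v ∈ D, ‖F x₂ - yδ‖ ^ p + α₂ * f x₂ ≤ ‖F v - yδ‖ ^ p + α₂ * f v) ∧
      τ₂ * c < ‖F x₂ - yδ‖) := by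
  have hp0 : 0 < p := by linarith
  constructor
  · have hlt : c ^ p < (τ₁ * c) ^ p :=
      Real.rpow_lt_rpow hc.le (by nlinarith) hp0
    have hfz : 0 < f z + 1 := by linarith [hf0 z]
    have hα : 0 < ((τ₁ * c) ^ p - c ^ p) / (f z + 1) := div_pos (by linarith) hfz
    obtain ⟨x, hxD, hx⟩ := hmin _ hα
    refine ⟨_, hα, x, hxD, hx, ?_⟩
    have h1 := hx z hzD
    set α := ((τ₁ * c) ^ p - c ^ p) / (f z + 1) with hαdef
    have h2 : α * (f z + 1) = (τ₁ * c) ^ p - c ^ p := div_mul_cancel₀ _ hfz.ne'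
    have h3 : ‖F z - yδ‖ ^ p ≤ c ^ p := Real.rpow_le_rpow (norm_nonneg _) hz hp0.le
    have h4 : 0 ≤ α * f x := mul_nonneg hα.le (hf0 x)
    have h5 : ‖F x - yδ‖ ^ p < (τ₁ * c) ^ p := by nlinarith
    exact (Real.rpow_lt_rpow_iff (norm_nonneg _) (by positivity) hp0).1 h5
  · have hε : ∃ ε : ℝ, 0 < ε ∧ ∀ x, f x < ε → τ₂ * c < ‖F x - yδ‖ := by
      let K : Set X := {x | f x ≤ 1} ∩ {x | ‖F x - yδ‖ ≤ τ₂ * c}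
      have hKc : IsCompact K := by
        apply Metric.isCompact_of_isClosed_isBounded
        · exact (hflsc.isClosed_preimage 1).inter
            (isClosed_le (by fun_prop) continuous_const)
        · exact (hfcoer 1).subset Set.inter_subset_left
      rcases K.eq_empty_or_nonempty with hK | hK
      · refine ⟨1, one_pos, fun x hx => ?_⟩
        by_contra hcon
        have : x ∈ K := ⟨hx.le, not_lt.mp hcon⟩
        rw [hK] at this
        exact this
      · obtain ⟨m, hmK, hm⟩ := (hflsc.lowerSemicontinuousOn K).exists_isMinOn hK hKc
        have hpos : 0 < f m := by
          refine lt_of_le_of_ne (hf0 m) fun h => ?_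
          have := (hx₀ m).1 h.symm
          subst this
          exact absurd hmK.2 (not_le.mpr hx₀res)
        refine ⟨f m, hpos, fun x hx => ?_⟩
        by_contra hcon
        have hxK : x ∈ K := ⟨hx.le.trans hmK.1, not_lt.mp hcon⟩
        exact absurd (hm hxK) (not_le.mpr hx)
    obtain ⟨ε, hε0, hε⟩ := hε
    have hR : 0 ≤ ‖F x₀ - yδ‖ ^ p := by positivity
    have hα : 0 < (‖F x₀ - yδ‖ ^ p + 1) / ε := by positivity
    obtain ⟨x, hxD, hx⟩ := hmin _ hα
    refine ⟨_, hα, x, hxD, hx, hε x ?_⟩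
    have h1 := hx x₀ hx₀D
    rw [(hx₀ x₀).2 rfl, mul_zero, add_zero] at h1
    have h2 : 0 ≤ ‖F x - yδ‖ ^ p := by positivity
    have h3 : (‖F x₀ - yδ‖ ^ p + 1) / ε * ε = ‖F x₀ - yδ‖ ^ p + 1 :=
      div_mul_cancel₀ _ hε0.ne'
    refine lt_of_mul_lt_mul_left ?_ hα.le
    linarith
end

section
/- Let X be a finite-dimensional real normed space, Y a real normed space, D ⊆ X nonempty, closed and convex, F : X → Y continuous, y^δ ∈ Y, and p ∈ [1, ∞). Let f : X → ℝ be nonnegative, convex, lower semicontinuous and coercive, and let x₀ ∈ D satisfy f(x) = 0 if and only if x = x₀. Let 1 < τ₁ ≤ τ₂ and c > 0, suppose there exists z ∈ D with ‖F(z) − y^δ‖ ≤ c, and suppose ‖F(x₀) − y^δ‖ > τ₂ c. Assume further (no-jump condition): there is no α > 0 for which there exist minimizers u and v of T_α over D with ‖F(u) − y^δ‖ < τ₁ c and ‖F(v) − y^δ‖ > τ₂ c simultaneously. Then there exist α > 0 and a minimizer x of T_α over D such that τ₁ c ≤ ‖F(x) − y^δ‖ ≤ τ₂ c. -/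
open Filter Topology

theorem aux_closed {X : Type*} [NormedAddCommGroup X] [NormedSpace ℝ X]
    [FiniteDimensional ℝ X] (D S : Set X) (hD : IsClosed D) (hS : IsClosed S)
    (G f : X → ℝ) (hG : Continuous G) (hf : Continuous f) (hG0 : ∀ x, 0 ≤ G x)
    (hfcoer : ∀ C : ℝ, Bornology.IsBounded {x : X | f x ≤ C}) (z : X) (hz : z ∈ D) :
    IsClosed {e : ℝ | 0 ≤ e ∧ ∃ u ∈ D, u ∈ S ∧ ∀ w ∈ D, e * G u + f u ≤ e * G w + f w} := by
  apply IsSeqClosed.isClosed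
  intro e a he hlim
  have ha : 0 ≤ a := ge_of_tendsto' hlim (fun n => (he n).1)
  choose he0 u huD huS hu using he
  obtain ⟨M, hM⟩ := hlim.bddAbove_range
  have hK : IsCompact (D ∩ S ∩ {x | f x ≤ M * G z + f z}) := by
    apply Metric.isCompact_of_isClosed_isBounded
    · exact (hD.inter hS).inter (isClosed_le hf continuous_const)
    · exact (hfcoer _).subset Set.inter_subset_right
  have huK : ∀ n, u n ∈ D ∩ S ∩ {x | f x ≤ M * G z + f z} := by
    intro n
    refine ⟨⟨huD n, huS n⟩, ?_⟩
    have h1 := hu n z hz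
    have h2 : e n ≤ M := hM ⟨n, rfl⟩
    have h3 := mul_nonneg (he0 n) (hG0 (u n))
    have h4 := mul_le_mul_of_nonneg_right h2 (hG0 z)
    show f (u n) ≤ _
    linarith
  obtain ⟨x, hx, φ, hφ, hxl⟩ := hK.tendsto_subseq huK
  refine ⟨ha, x, hx.1.1, hx.1.2, fun w hw => ?_⟩
  have hel := hlim.comp hφ.tendsto_atTop
  have hGl := (hG.tendsto x).comp hxl
  have hfl := (hf.tendsto x).comp hxl
  exact le_of_tendsto_of_tendsto' ((hel.mul hGl).add hfl)
    ((hel.mul_const (G w)).add_const (f w)) (fun n => hu (φ n) w hw)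

theorem aux_exists {X : Type*} [NormedAddCommGroup X] [NormedSpace ℝ X]
    [FiniteDimensional ℝ X] (D : Set X) (hD : IsClosed D)
    (G f : X → ℝ) (hG : Continuous G) (hf : Continuous f) (hG0 : ∀ x, 0 ≤ G x)
    (hfcoer : ∀ C : ℝ, Bornology.IsBounded {x : X | f x ≤ C}) (z : X) (hz : z ∈ D)
    (e : ℝ) (he : 0 ≤ e) : ∃ u ∈ D, ∀ w ∈ D, e * G u + f u ≤ e * G w + f w := by
  have hK : IsCompact (D ∩ {x | f x ≤ e * G z + f z}) := by
    apply Metric.isCompact_of_isClosed_isBounded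
    · exact hD.inter (isClosed_le hf continuous_const)
    · exact (hfcoer _).subset Set.inter_subset_right
  have hzK : z ∈ D ∩ {x | f x ≤ e * G z + f z} :=
    ⟨hz, le_add_of_nonneg_left (mul_nonneg he (hG0 z))⟩
  obtain ⟨u, huK, hu⟩ := hK.exists_isMinOn ⟨z, hzK⟩
    ((continuous_const.mul hG).add hf : Continuous fun x => e * G x + f x).continuousOn
  refine ⟨u, huK.1, fun w hw => ?_⟩
  by_cases h : f w ≤ e * G z + f z
  · exact hu ⟨hw, h⟩
  · have h1 : e * G u + f u ≤ e * G z + f z := hu hzK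
    have := mul_nonneg he (hG0 w)
    linarith

/-- Well-posedness of the discrete Morozov discrepancy principle: under the no-jump
condition there exist a parameter `α > 0` and a Tikhonov minimizer whose residual lies
in the band `[τ₁ c, τ₂ c]`. -/
theorem stmt_8 {X Y : Type*} [NormedAddCommGroup X] [NormedSpace ℝ X]
    [FiniteDimensional ℝ X]
    [NormedAddCommGroup Y] [NormedSpace ℝ Y]
    (D : Set X) (hDne : D.Nonempty) (hDclosed : IsClosed D) (hDconv : Convex ℝ D)
    (F : X → Y) (hF : Continuous F) (yδ : Y)
    (p : ℝ) (hp : 1 ≤ p)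
    (f : X → ℝ) (hf0 : ∀ x, 0 ≤ f x) (hfconv : ConvexOn ℝ Set.univ f)
    (hflsc : LowerSemicontinuous f)
    (hfcoer : ∀ C : ℝ, Bornology.IsBounded {x : X | f x ≤ C})
    (x₀ : X) (hx₀D : x₀ ∈ D) (hx₀ : ∀ x, f x = 0 ↔ x = x₀)
    (τ₁ τ₂ : ℝ) (hτ₁ : 1 < τ₁) (hτ₁₂ : τ₁ ≤ τ₂)
    (c : ℝ) (hc : 0 < c)
    (z : X) (hzD : z ∈ D) (hz : ‖F z - yδ‖ ≤ c)
    (hx₀res : τ₂ * c < ‖F x₀ - yδ‖)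
    (hnojump : ¬ ∃ α : ℝ, 0 < α ∧ ∃ u ∈ D, ∃ v ∈ D,
      (∀ w ∈ D, ‖F u - yδ‖ ^ p + α * f u ≤ ‖F w - yδ‖ ^ p + α * f w) ∧
      (∀ w ∈ D, ‖F v - yδ‖ ^ p + α * f v ≤ ‖F w - yδ‖ ^ p + α * f w) ∧
      ‖F u - yδ‖ < τ₁ * c ∧ τ₂ * c < ‖F v - yδ‖) :
    ∃ α : ℝ, 0 < α ∧ ∃ x ∈ D,
      (∀ v ∈ D, ‖F x - yδ‖ ^ p + α * f x ≤ ‖F v - yδ‖ ^ p + α * f v) ∧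
      τ₁ * c ≤ ‖F x - yδ‖ ∧ ‖F x - yδ‖ ≤ τ₂ * c := by
  have hfc : Continuous f := continuousOn_univ.1 (hfconv.continuousOn isOpen_univ)
  have hp0 : 0 < p := by linarith
  have hR : Continuous fun x => ‖F x - yδ‖ := (hF.sub continuous_const).norm
  have hG : Continuous fun x => ‖F x - yδ‖ ^ p := hR.rpow_const (fun _ => Or.inr hp0.le)
  have hG0 : ∀ x, 0 ≤ ‖F x - yδ‖ ^ p := fun x => Real.rpow_nonneg (norm_nonneg _) _
  have key : ∀ e : ℝ, 0 < e → ∀ u : X,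
      (∀ w ∈ D, e * ‖F u - yδ‖ ^ p + f u ≤ e * ‖F w - yδ‖ ^ p + f w) →
      ∀ w ∈ D, ‖F u - yδ‖ ^ p + e⁻¹ * f u ≤ ‖F w - yδ‖ ^ p + e⁻¹ * f w := by
    intro e he u hu w hw
    have h := mul_le_mul_of_nonneg_left (hu w hw) (inv_pos.2 he).le
    rw [mul_add, mul_add, inv_mul_cancel_left₀ he.ne', inv_mul_cancel_left₀ he.ne'] at h
    exact h
  have hA := aux_closed D {x | ‖F x - yδ‖ ≤ τ₁ * c} hDclosed
    (isClosed_le hR continuous_const) _ f hG hfc hG0 hfcoer z hzD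
  have hB := aux_closed D {x | τ₂ * c ≤ ‖F x - yδ‖} hDclosed
    (isClosed_le continuous_const hR) _ f hG hfc hG0 hfcoer z hzD
  have hfx₀ : f x₀ = 0 := (hx₀ x₀).2 rfl
  have hex := aux_exists D hDclosed _ f hG hfc hG0 hfcoer z hzD
  have hτc : τ₁ * c ≤ τ₂ * c := mul_le_mul_of_nonneg_right hτ₁₂ hc.le
  by_contra hcon
  have hband : ∀ e : ℝ, 0 < e → ∀ u ∈ D,
      (∀ w ∈ D, e * ‖F u - yδ‖ ^ p + f u ≤ e * ‖F w - yδ‖ ^ p + f w) →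
      τ₁ * c ≤ ‖F u - yδ‖ → ‖F u - yδ‖ ≤ τ₂ * c → False :=
    fun e he u hu hm h1 h2 => hcon ⟨e⁻¹, inv_pos.2 he, u, hu, key e he u hm, h1, h2⟩
  have h0min : ∀ w ∈ D, (0 : ℝ) * ‖F x₀ - yδ‖ ^ p + f x₀ ≤ 0 * ‖F w - yδ‖ ^ p + f w := by
    intro w _
    simp [hfx₀, hf0 w]
  have hconn := isPreconnected_closed_iff.1 (isPreconnected_Ici (a := (0 : ℝ))) _ _ hA hB
    ?_ ?_ ?_
  · obtain ⟨e, he0, ⟨-, u, huD, huS, hu⟩, ⟨-, v, hvD, hvS, hv⟩⟩ := hconn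
    simp only [Set.mem_ofPred_eq] at huS hvS
    rcases (Set.mem_Ici.1 he0).eq_or_lt with rfl | he
    · have h1 := hu x₀ hx₀D
      simp only [zero_mul, zero_add, hfx₀] at h1
      have h2 := (hx₀ u).1 (le_antisymm h1 (hf0 u))
      rw [h2] at huS
      linarith
    · refine hnojump ⟨e⁻¹, inv_pos.2 he, u, huD, v, hvD, key e he u hu, key e he v hv, ?_, ?_⟩
      · by_contra h
        exact hband e he u huD hu (not_lt.1 h) (huS.trans hτc)
      · by_contra h
        exact hband e he v hvD hv (hτc.trans hvS) (not_lt.1 h)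
  · intro e he
    rcases (Set.mem_Ici.1 he).eq_or_lt with rfl | he'
    · exact Or.inr ⟨le_rfl, x₀, hx₀D, hx₀res.le, h0min⟩
    · obtain ⟨u, huD, hu⟩ := hex e he
      rcases le_or_gt ‖F u - yδ‖ (τ₁ * c) with h | h
      · exact Or.inl ⟨he, u, huD, h, hu⟩
      · refine Or.inr ⟨he, u, huD, ?_, hu⟩
        by_contra h2
        exact hband e he' u huD hu h.le (not_le.1 h2).le
  · have hlt : c ^ p < (τ₁ * c) ^ p := Real.rpow_lt_rpow hc.le (by nlinarith) hp0
    have hd : 0 < (τ₁ * c) ^ p - c ^ p := sub_pos.2 hlt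
    have he : 0 < (f z + 1) / ((τ₁ * c) ^ p - c ^ p) :=
      div_pos (by linarith [hf0 z]) hd
    have hmul : (f z + 1) / ((τ₁ * c) ^ p - c ^ p) * ((τ₁ * c) ^ p - c ^ p) = f z + 1 :=
      div_mul_cancel₀ _ hd.ne'
    generalize (f z + 1) / ((τ₁ * c) ^ p - c ^ p) = e at he hmul
    obtain ⟨u, huD, hu⟩ := hex e he.le
    refine ⟨e, he.le, he.le, u, huD, ?_, hu⟩
    by_contra h
    have h1 : (τ₁ * c) ^ p ≤ ‖F u - yδ‖ ^ p :=
      Real.rpow_le_rpow (by nlinarith) (not_le.1 h).le hp0.le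
    have h2 : ‖F z - yδ‖ ^ p ≤ c ^ p := Real.rpow_le_rpow (norm_nonneg _) hz hp0.le
    have h3 := hu z hzD
    have h4 := mul_le_mul_of_nonneg_left h1 he.le
    have h5 := mul_le_mul_of_nonneg_left h2 he.le
    have h6 := hf0 u
    linarith
  · exact ⟨0, Set.self_mem_Ici, le_rfl, x₀, hx₀D, hx₀res.le, h0min⟩
end

section
/- Let X and Y be real normed spaces, D ⊆ X closed and convex, F : X → Y continuous, y^δ ∈ Y, δ > 0, p ∈ [1, ∞), and let f : X → ℝ be nonnegative, convex, lower semicontinuous and coercive with a unique zero x₀ ∈ D. Let 1 < τ < τ₂ < λ. Let (X_m)_{m∈ℕ} be an increasing sequence of finite-dimensional subspaces of X with each D_m := D ∩ X_m nonempty and containing x₀. Suppose there are points z_m ∈ D_m and real numbers γ_m ≥ 0 with ‖F(z_m) − y^δ‖ ≤ δ + γ_m and γ_m → 0 as m → ∞; suppose ‖F(x₀) − y^δ‖ > τ₂(δ + γ_m) for every m; and suppose that for every m there is no α > 0 admitting minimizers u, v of T_α over D_m with ‖F(u) − y^δ‖ < τ(δ+γ_m) and ‖F(v) − y^δ‖ >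 τ₂(δ+γ_m) simultaneously. Then there exist m ∈ ℕ, α > 0 and a minimizer x of T_α over D_m such that τδ ≤ ‖F(x) − y^δ‖ ≤ λδ. -/
open Filter Topology

theorem aux_compact {X : Type*} [NormedAddCommGroup X] [NormedSpace ℝ X]
    (S : Subspace ℝ X) [FiniteDimensional ℝ S] (E : Set X) (hE : IsClosed E)
    (hb : Bornology.IsBounded E) : IsCompact (E ∩ (S : Set X)) := by
  have hp : ProperSpace S := FiniteDimensional.proper ℝ S
  have h1 : IsCompact ((Subtype.val : S → X) ⁻¹' E) := by
    apply Metric.isCompact_of_isClosed_isBounded (hE.preimage continuous_subtype_val)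
    exact (isometry_subtype_coe (s := (S : Set X))).antilipschitz.isBounded_preimage hb
  have h2 := h1.image (continuous_subtype_val (p := fun x => x ∈ S))
  have h3 : Subtype.val '' ((Subtype.val : S → X) ⁻¹' E) = E ∩ (S : Set X) := by
    ext x
    simp
  rwa [h3] at h2

/-- Abstract core: `g` continuous nonnegative, `f` lsc with compact sublevel sets on `K`. -/
theorem aux_exists_s9 {X : Type*} [NormedAddCommGroup X]
    (K : Set X) (f g : X → ℝ) (hg : Continuous g) (hg0 : ∀ x, 0 ≤ g x)
    (hf0 : ∀ x, 0 ≤ f x) (hf : LowerSemicontinuous f)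
    (hK : ∀ C : ℝ, IsCompact (K ∩ {x | f x ≤ C}))
    (x₀ : X) (hx₀ : x₀ ∈ K) (hfx₀ : f x₀ = 0) (α : ℝ) (hα : 0 < α) :
    ∃ x ∈ K, ∀ w ∈ K, g x + α * f x ≤ g w + α * f w := by
  have hl : LowerSemicontinuous (fun x => α⁻¹ * g x + f x) :=
    (continuous_const.mul hg).lowerSemicontinuous.add hf
  have hm : x₀ ∈ K ∩ {x | f x ≤ α⁻¹ * g x₀} :=
    ⟨hx₀, by simp only [Set.mem_setOf_eq, hfx₀]; have := hg0 x₀; positivity⟩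
  obtain ⟨x, hx, hmin⟩ := (hl.lowerSemicontinuousOn _).exists_isMinOn ⟨x₀, hm⟩ (hK _)
  have key : ∀ w ∈ K, α⁻¹ * g x + f x ≤ α⁻¹ * g w + f w := by
    intro w hw
    by_cases h : f w ≤ α⁻¹ * g x₀
    · exact hmin ⟨hw, h⟩
    · have h1 : α⁻¹ * g x + f x ≤ α⁻¹ * g x₀ + f x₀ := hmin hm
      have h2 : 0 ≤ α⁻¹ * g w := by have := hg0 w; positivity
      push Not at h
      linarith
  refine ⟨x, hx.1, fun w hw => ?_⟩
  have := mul_le_mul_of_nonneg_left (key w hw) hα.le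
  simpa [mul_add, mul_inv_cancel_left₀ hα.ne'] using this

theorem aux_closed_s9 {X : Type*} [NormedAddCommGroup X]
    (K E : Set X) (hE : IsClosed E) (f g : X → ℝ) (hg : Continuous g) (hg0 : ∀ x, 0 ≤ g x)
    (hf : LowerSemicontinuous f)
    (hK : ∀ C : ℝ, IsCompact (K ∩ {x | f x ≤ C}))
    (x₀ : X) (hx₀ : x₀ ∈ K) (hfx₀ : f x₀ = 0) :
    IsClosed {t : ℝ | ∃ x ∈ K, x ∈ E ∧
      ∀ w ∈ K, g x + Real.exp t * f x ≤ g w + Real.exp t * f w} := by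
  have equ : ∀ (t : ℝ) (x w : X), g x + Real.exp t * f x ≤ g w + Real.exp t * f w ↔
      Real.exp (-t) * (g x - g w) + f x ≤ f w := by
    intro t x w
    have hp := Real.exp_pos t
    rw [← mul_le_mul_iff_right₀ hp (b := Real.exp (-t) * (g x - g w) + f x), mul_add,
      ← mul_assoc, ← Real.exp_add]
    simp only [add_neg_cancel, Real.exp_zero, one_mul]
    constructor <;> intro h <;> linarith
  apply IsSeqClosed.isClosed
  intro t a ht hta
  choose x hxK hxE hmin using ht
  obtain ⟨B, hB⟩ := hta.bddBelow_range
  have hB' : ∀ n, B ≤ t n := fun n => hB ⟨n, rfl⟩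
  have hx : ∀ n, x n ∈ K ∩ {x | f x ≤ Real.exp (-B) * g x₀} := by
    intro n
    refine ⟨hxK n, ?_⟩
    have h1 := (equ _ _ _).1 (hmin n x₀ hx₀)
    have h2 : Real.exp (-t n) ≤ Real.exp (-B) := Real.exp_le_exp.2 (by linarith [hB' n])
    have h3 := mul_le_mul_of_nonneg_right h2 (hg0 x₀)
    have h4 := mul_nonneg (Real.exp_pos (-t n)).le (hg0 (x n))
    simp only [Set.mem_setOf_eq]
    rw [hfx₀] at h1
    linarith
  obtain ⟨y, hy, φ, hφ, hlim⟩ := (hK _).tendsto_subseq hx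
  refine ⟨y, hy.1, hE.mem_of_tendsto hlim (Eventually.of_forall fun n => hxE _), ?_⟩
  intro w hw
  rw [equ]
  have hl : LowerSemicontinuous
      (fun q : ℝ × X => Real.exp (-q.1) * (g q.2 - g w) + f q.2) := by
    apply LowerSemicontinuous.add
    · apply Continuous.lowerSemicontinuous
      fun_prop
    · exact hf.comp continuous_snd
  have hc := hl.isClosed_preimage (f w)
  have ht2 : Tendsto (fun n => (t (φ n), x (φ n))) atTop (𝓝 (a, y)) :=
    (hta.comp hφ.tendsto_atTop).prodMk_nhds hlim
  exact hc.mem_of_tendsto ht2 (Eventually.of_forall fun n => (equ _ _ _).1 (hmin _ w hw))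

theorem aux_main {X : Type*} [NormedAddCommGroup X]
    (K : Set X) (f r : X → ℝ) (hr : Continuous r) (hr0 : ∀ x, 0 ≤ r x)
    (p : ℝ) (hp : 1 ≤ p)
    (hf0 : ∀ x, 0 ≤ f x) (hf : LowerSemicontinuous f)
    (hK : ∀ C : ℝ, IsCompact (K ∩ {x | f x ≤ C}))
    (x₀ : X) (hx₀ : x₀ ∈ K) (hfx₀ : ∀ x, f x = 0 ↔ x = x₀)
    (a b : ℝ) (hab : a ≤ b) (hb : b < r x₀) (z : X) (hz : z ∈ K) (hza : r z < a)
    (hno : ¬ ∃ α : ℝ, 0 < α ∧ ∃ u ∈ K, ∃ v ∈ K,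
      (∀ w ∈ K, r u ^ p + α * f u ≤ r w ^ p + α * f w) ∧
      (∀ w ∈ K, r v ^ p + α * f v ≤ r w ^ p + α * f w) ∧ r u < a ∧ b < r v) :
    ∃ α : ℝ, 0 < α ∧ ∃ x ∈ K,
      (∀ w ∈ K, r x ^ p + α * f x ≤ r w ^ p + α * f w) ∧ a ≤ r x ∧ r x ≤ b := by
  by_contra hcon
  push Not at hcon
  have hp0 : 0 < p := by linarith
  have hg : Continuous (fun x => r x ^ p) := hr.rpow_const (fun x => Or.inr hp0.le)
  have hg0 : ∀ x, 0 ≤ r x ^ p := fun x => Real.rpow_nonneg (hr0 x) p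
  have hf00 : f x₀ = 0 := (hfx₀ x₀).2 rfl
  have hex := aux_exists_s9 K f _ hg hg0 hf0 hf hK x₀ hx₀ hf00
  have cA := aux_closed_s9 K {x | r x ≤ a} (isClosed_le hr continuous_const) f _ hg hg0 hf hK
    x₀ hx₀ hf00
  have cB := aux_closed_s9 K {x | b ≤ r x} (isClosed_le continuous_const hr) f _ hg hg0 hf hK
    x₀ hx₀ hf00
  set A := {t : ℝ | ∃ x ∈ K, x ∈ {x | r x ≤ a} ∧
      ∀ w ∈ K, r x ^ p + Real.exp t * f x ≤ r w ^ p + Real.exp t * f w} with hA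
  set B := {t : ℝ | ∃ x ∈ K, x ∈ {x | b ≤ r x} ∧
      ∀ w ∈ K, r x ^ p + Real.exp t * f x ≤ r w ^ p + Real.exp t * f w} with hB
  have hAB : A = Bᶜ := by
    ext t
    constructor
    · rintro ⟨u, hu, hua, hum⟩ ⟨v, hv, hvb, hvm⟩
      simp only [Set.mem_setOf_eq] at hua hvb
      refine hno ⟨_, Real.exp_pos t, u, hu, v, hv, hum, hvm, ?_, ?_⟩
      · by_contra h
        push Not at h
        have := hcon _ (Real.exp_pos t) u hu hum h
        linarith
      · exact hcon _ (Real.exp_pos t) v hv hvm (by linarith)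
    · intro ht
      obtain ⟨x, hx, hm⟩ := hex _ (Real.exp_pos t)
      refine ⟨x, hx, ?_, hm⟩
      by_contra h
      simp only [Set.mem_setOf_eq, not_le] at h
      exact ht ⟨x, hx, (hcon _ (Real.exp_pos t) x hx hm h.le).le, hm⟩
  have hclopen : IsClopen A := ⟨cA, by rw [hAB]; exact cB.isOpen_compl⟩
  have ha : (0:ℝ) < a := (hr0 z).trans_lt hza
  rcases isClopen_iff.1 hclopen with h | h
  · -- A nonempty
    have hlt : r z ^ p < a ^ p := Real.rpow_lt_rpow (hr0 z) hza hp0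
    have hfz := hf0 z
    set α := (a ^ p - r z ^ p) / (f z + 1) with hα
    have hα0 : 0 < α := div_pos (by linarith) (by linarith)
    obtain ⟨x, hx, hm⟩ := hex α hα0
    have hmem : Real.log α ∈ A := by
      refine ⟨x, hx, ?_, by rwa [Real.exp_log hα0]⟩
      have h1 := hm z hz
      have h2 : α * (f z + 1) = a ^ p - r z ^ p := div_mul_cancel₀ _ (by linarith)
      have h3 := mul_nonneg hα0.le (hf0 x)
      have h4 : r x ^ p ≤ a ^ p := by nlinarith
      exact (Real.rpow_le_rpow_iff (hr0 x) ha.le hp0).1 h4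
    rw [h] at hmem
    exact hmem
  · -- B nonempty
    have hBempty : ∀ t, t ∉ B := by
      intro t ht
      have : t ∈ A := by rw [h]; trivial
      rw [hAB] at this
      exact this ht
    obtain ⟨c, hc0, hc⟩ : ∃ c : ℝ, 0 < c ∧ ∀ x ∈ K, r x ≤ b → c ≤ f x := by
      have hcomp : IsCompact ((K ∩ {x | f x ≤ 1}) ∩ {x | r x ≤ b}) :=
        (hK 1).inter_right (isClosed_le hr continuous_const)
      by_cases hne : ((K ∩ {x | f x ≤ 1}) ∩ {x | r x ≤ b}).Nonempty
      · obtain ⟨y, hy, hmin⟩ := (hf.lowerSemicontinuousOn _).exists_isMinOn hne hcomp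
        have hy1 : f y ≤ 1 := hy.1.2
        refine ⟨f y, ?_, ?_⟩
        · refine lt_of_le_of_ne (hf0 y) fun h0 => ?_
          have := (hfx₀ y).1 h0.symm
          have h2 : r y ≤ b := hy.2
          rw [this] at h2
          linarith
        · intro x hx hxb
          by_cases hx1 : f x ≤ 1
          · exact hmin ⟨⟨hx, hx1⟩, hxb⟩
          · push Not at hx1
            linarith
      · refine ⟨1, one_pos, fun x hx hxb => ?_⟩
        by_contra hx1
        push Not at hx1
        exact hne ⟨x, ⟨hx, hx1.le⟩, hxb⟩
    set α := (r x₀ ^ p + 1) / c with hα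
    have hα0 : 0 < α := div_pos (by linarith [hg0 x₀]) hc0
    obtain ⟨x, hx, hm⟩ := hex α hα0
    refine hBempty (Real.log α) ⟨x, hx, ?_, by rwa [Real.exp_log hα0]⟩
    by_contra hxb
    simp only [Set.mem_setOf_eq, not_le] at hxb
    have h1 := hm x₀ hx₀
    have h2 := mul_le_mul_of_nonneg_left (hc x hx hxb.le) hα0.le
    have h3 : α * c = r x₀ ^ p + 1 := div_mul_cancel₀ _ hc0.ne'
    have h4 := hg0 x
    rw [hf00] at h1
    linarith

/-- Simultaneous discrepancy-based choice of the discretization level `m` and of the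
regularization parameter `α`: there exist `m`, `α > 0` and a Tikhonov minimizer over
`D ∩ X_m` whose residual lies in the band `[τδ, λδ]`. -/
theorem stmt_9 {X Y : Type*} [NormedAddCommGroup X] [NormedSpace ℝ X]
    [NormedAddCommGroup Y] [NormedSpace ℝ Y]
    (D : Set X) (hDclosed : IsClosed D) (hDconv : Convex ℝ D)
    (F : X → Y) (hF : Continuous F)
    (yδ : Y) (δ : ℝ) (hδ : 0 < δ)
    (p : ℝ) (hp : 1 ≤ p)
    (f : X → ℝ) (hf0 : ∀ x, 0 ≤ f x) (hfconv : ConvexOn ℝ Set.univ f)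
    (hflsc : LowerSemicontinuous f)
    (hfcoer : ∀ C : ℝ, Bornology.IsBounded {x : X | f x ≤ C})
    (x₀ : X) (hx₀D : x₀ ∈ D) (hx₀ : ∀ x, f x = 0 ↔ x = x₀)
    (τ τ₂ lam : ℝ) (hτ : 1 < τ) (hττ₂ : τ < τ₂) (hτ₂lam : τ₂ < lam)
    (Xm : ℕ → Subspace ℝ X) (hfd : ∀ m, FiniteDimensional ℝ (Xm m))
    (hXmono : Monotone Xm)
    (hDmne : ∀ m, (D ∩ (Xm m : Set X)).Nonempty)
    (hx₀m : ∀ m, x₀ ∈ (Xm m : Set X))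
    (z : ℕ → X) (hz : ∀ m, z m ∈ D ∩ (Xm m : Set X))
    (γ : ℕ → ℝ) (hγ0 : ∀ m, 0 ≤ γ m)
    (hzres : ∀ m, ‖F (z m) - yδ‖ ≤ δ + γ m)
    (hγlim : Tendsto γ atTop (𝓝 0))
    (hx₀res : ∀ m, τ₂ * (δ + γ m) < ‖F x₀ - yδ‖)
    (hnojump : ∀ m, ¬ ∃ α : ℝ, 0 < α ∧
      ∃ u ∈ D ∩ (Xm m : Set X), ∃ v ∈ D ∩ (Xm m : Set X),
      (∀ w ∈ D ∩ (Xm m : Set X),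
        ‖F u - yδ‖ ^ p + α * f u ≤ ‖F w - yδ‖ ^ p + α * f w) ∧
      (∀ w ∈ D ∩ (Xm m : Set X),
        ‖F v - yδ‖ ^ p + α * f v ≤ ‖F w - yδ‖ ^ p + α * f w) ∧
      ‖F u - yδ‖ < τ * (δ + γ m) ∧ τ₂ * (δ + γ m) < ‖F v - yδ‖) :
    ∃ (m : ℕ) (α : ℝ), 0 < α ∧ ∃ x ∈ D ∩ (Xm m : Set X),
      (∀ v ∈ D ∩ (Xm m : Set X),
        ‖F x - yδ‖ ^ p + α * f x ≤ ‖F v - yδ‖ ^ p + α * f v) ∧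
      τ * δ ≤ ‖F x - yδ‖ ∧ ‖F x - yδ‖ ≤ lam * δ := by
  obtain ⟨m, hm⟩ : ∃ m, τ₂ * (δ + γ m) ≤ lam * δ := by
    have h1 : Tendsto (fun m => τ₂ * (δ + γ m)) atTop (𝓝 (τ₂ * (δ + 0))) :=
      (hγlim.const_add δ).const_mul τ₂
    have h2 : τ₂ * (δ + 0) < lam * δ := by nlinarith
    obtain ⟨m, hm⟩ := (h1.eventually (gt_mem_nhds h2)).exists
    exact ⟨m, hm.le⟩
  have hpos : 0 < δ + γ m := by linarith [hγ0 m]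
  have hK : ∀ C : ℝ, IsCompact ((D ∩ (Xm m : Set X)) ∩ {x | f x ≤ C}) := by
    intro C
    have := hfd m
    have h := aux_compact (Xm m) (D ∩ {x | f x ≤ C})
      (hDclosed.inter (hflsc.isClosed_preimage C)) ((hfcoer C).subset Set.inter_subset_right)
    rwa [Set.inter_right_comm] at h
  obtain ⟨α, hα, x, hx, hmin, h1, h2⟩ := aux_main (D ∩ (Xm m : Set X)) f (fun x => ‖F x - yδ‖)
    (hF.sub continuous_const).norm (fun x => norm_nonneg _) p hp hf0 hflsc hK x₀
    ⟨hx₀D, hx₀m m⟩ hx₀ (τ * (δ + γ m)) (τ₂ * (δ + γ m)) (by nlinarith) (hx₀res m)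
    (z m) (hz m) (lt_of_le_of_lt (hzres m) (by nlinarith)) (hnojump m)
  refine ⟨m, α, hα, x, hx, hmin, ?_, h2.trans hm⟩
  have := hγ0 m
  have h3 : 0 ≤ τ * γ m := by positivity
  have h1' : τ * (δ + γ m) ≤ ‖F x - yδ‖ := h1
  linarith
end

section
/- Let X and Y be real normed spaces, D ⊆ X closed, convex and weakly sequentially closed, F : X → Y continuous on D and weakly sequentially continuous on D, y^δ ∈ Y, δ > 0, 1 < τ < λ, p ∈ [1, ∞), and let f : X → ℝ be nonnegative, convex, weakly sequentially lower semicontinuous and continuous at every point of D. Let (D_k)_{k∈ℕ} be subsets of D such that for every x ∈ D there exists a sequence u_k ∈ D_k with ‖u_k − x‖ → 0. Suppose α_k > 0 with α_k → α̃ ≥ 0, and for each k let x_k ∈ D_k be a minimizer of T_{α_k}(x) = ‖F(x) − y^δ‖^p + α_k f(x) over D_k satisfying τδ ≤ ‖F(x_k) − y^δ‖ ≤ λδ, and suppose x_k converges weakly to some x̃ ∈ X. Then x̃ ∈ D, τδ ≤ ‖F(x̃) − y^δ‖ ≤ λδ, and x̃ minimizes T_{α̃}(x) = ‖F(x) − y^δ‖^p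 + α̃ f(x) over all of D. -/
open Filter Topology

/-- The continuous Morozov discrepancy principle is recovered in the limit of the
discretization levels: a weak limit of discrete Tikhonov minimizers satisfying the
discrepancy principle is a Tikhonov minimizer over all of `D` with parameter `α̃`,
and it satisfies the discrepancy principle. -/
theorem stmt_10 {X Y : Type*} [NormedAddCommGroup X] [NormedSpace ℝ X]
    [NormedAddCommGroup Y] [NormedSpace ℝ Y]
    (D : Set X) (hDclosed : IsClosed D) (hDconv : Convex ℝ D)
    (hDwsc : ∀ (u : ℕ → X) (x : X), (∀ k, u k ∈ D) → WeakTendsto u x → x ∈ D)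
    (F : X → Y) (hFc : ContinuousOn F D)
    (hFwc : ∀ (u : ℕ → X) (x : X), (∀ k, u k ∈ D) → x ∈ D → WeakTendsto u x →
      WeakTendsto (fun k => F (u k)) (F x))
    (yδ : Y) (δ : ℝ) (hδ : 0 < δ)
    (τ lam : ℝ) (hτ : 1 < τ) (hτlam : τ < lam)
    (p : ℝ) (hp : 1 ≤ p)
    (f : X → ℝ) (hf0 : ∀ x, 0 ≤ f x) (hfconv : ConvexOn ℝ Set.univ f)
    (hfwlsc : ∀ (u : ℕ → X) (x : X), WeakTendsto u x →
      f x ≤ Filter.liminf (fun k => f (u k)) atTop)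
    (hfc : ∀ x ∈ D, ContinuousAt f x)
    (Dk : ℕ → Set X) (hDk : ∀ k, Dk k ⊆ D)
    (hdense : ∀ x ∈ D, ∃ u : ℕ → X, (∀ k, u k ∈ Dk k) ∧
      Tendsto (fun k => ‖u k - x‖) atTop (𝓝 0))
    (α : ℕ → ℝ) (hαpos : ∀ k, 0 < α k)
    (αt : ℝ) (hαt : 0 ≤ αt) (hαlim : Tendsto α atTop (𝓝 αt))
    (x : ℕ → X)
    (hxmem : ∀ k, x k ∈ Dk k)
    (hxmin : ∀ k, ∀ v ∈ Dk k,
      ‖F (x k) - yδ‖ ^ p + α k * f (x k) ≤ ‖F v - yδ‖ ^ p + α k * f v)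
    (hxdisc : ∀ k, τ * δ ≤ ‖F (x k) - yδ‖ ∧ ‖F (x k) - yδ‖ ≤ lam * δ)
    (xt : X) (hxw : WeakTendsto x xt) :
    xt ∈ D ∧ (τ * δ ≤ ‖F xt - yδ‖ ∧ ‖F xt - yδ‖ ≤ lam * δ) ∧
    ∀ v ∈ D, ‖F xt - yδ‖ ^ p + αt * f xt ≤ ‖F v - yδ‖ ^ p + αt * f v := by
  have hxD : ∀ k, x k ∈ D := fun k => hDk k (hxmem k)
  have hxt : xt ∈ D := hDwsc x xt hxD hxw
  have hFw := hFwc x xt hxD hxt hxw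
  have hp0 : 0 ≤ p := by linarith
  have hpp : 0 < p := by linarith
  have hτδ : 0 ≤ τ * δ := by nlinarith
  have key : ∀ (g : ℕ → ℝ) (G : ℝ), (∀ k, g k ≤ ‖F (x k) - yδ‖ ^ p) →
      Tendsto g atTop (𝓝 G) → ∀ v ∈ D,
      G + αt * f xt ≤ ‖F v - yδ‖ ^ p + αt * f v := by
    intro g G hg hG v hv
    obtain ⟨u, hu, hulim⟩ := hdense v hv
    have hul : Tendsto u atTop (𝓝 v) := tendsto_iff_norm_sub_tendsto_zero.2 hulim
    have hfu : Tendsto (fun k => f (u k)) atTop (𝓝 (f v)) := (hfc v hv).tendsto.comp hul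
    have hFu : Tendsto (fun k => F (u k)) atTop (𝓝 (F v)) :=
      (hFc v hv).tendsto.comp
        (tendsto_nhdsWithin_iff.2 ⟨hul, Eventually.of_forall fun k => hDk k (hu k)⟩)
    have hT : Tendsto (fun k => ‖F (u k) - yδ‖ ^ p + α k * f (u k)) atTop
        (𝓝 (‖F v - yδ‖ ^ p + αt * f v)) :=
      (((hFu.sub_const yδ).norm).rpow_const (Or.inr hp0)).add (hαlim.mul hfu)
    have hb : ∀ b < f xt, G + αt * b ≤ ‖F v - yδ‖ ^ p + αt * f v := by
      intro b hb
      have hev : ∀ᶠ k in atTop, b < f (x k) :=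
        eventually_lt_of_lt_liminf (lt_of_lt_of_le hb (hfwlsc x xt hxw))
          (isBoundedUnder_of ⟨0, fun k => hf0 (x k)⟩)
      refine le_of_tendsto_of_tendsto (hG.add (hαlim.mul_const b)) hT ?_
      filter_upwards [hev] with k hk
      have h1 := hxmin k (u k) (hu k)
      have h2 := mul_le_mul_of_nonneg_left hk.le (hαpos k).le
      have h3 := hg k
      linarith
    have hc : Tendsto (fun b : ℝ => G + αt * b) (𝓝[<] (f xt)) (𝓝 (G + αt * f xt)) := by
      have : Continuous (fun b : ℝ => G + αt * b) := by fun_prop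
      exact this.continuousAt.tendsto.mono_left nhdsWithin_le_nhds
    exact le_of_tendsto hc (eventually_nhdsWithin_of_forall hb)
  obtain ⟨φ, hφ1, hφ⟩ := exists_dual_vector'' ℝ (F xt - yδ)
  have hφ' : φ (F xt - yδ) = ‖F xt - yδ‖ := by simpa using hφ
  have hφlim : Tendsto (fun k => φ (F (x k) - yδ)) atTop (𝓝 ‖F xt - yδ‖) := by
    rw [← hφ']
    simp only [map_sub]
    exact (hFw φ).sub_const _
  have hφle : ∀ k, φ (F (x k) - yδ) ≤ ‖F (x k) - yδ‖ := fun k =>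
    (le_abs_self _).trans (by simpa using φ.le_of_opNorm_le hφ1 (F (x k) - yδ))
  refine ⟨hxt, ⟨?_, ?_⟩, ?_⟩
  · have h := key (fun _ => (τ * δ) ^ p) ((τ * δ) ^ p)
      (fun k => Real.rpow_le_rpow hτδ (hxdisc k).1 hp0) tendsto_const_nhds xt hxt
    exact (Real.rpow_le_rpow_iff hτδ (norm_nonneg _) hpp).1 (by linarith)
  · exact le_of_tendsto hφlim (Eventually.of_forall fun k => (hφle k).trans (hxdisc k).2)
  · refine key (fun k => (max 0 (φ (F (x k) - yδ))) ^ p) _ (fun k =>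
      Real.rpow_le_rpow (le_max_left _ _) (max_le (norm_nonneg _) (hφle k)) hp0) ?_
    have h := (tendsto_const_nhds (x := (0 : ℝ))).max hφlim
    rw [max_eq_right (norm_nonneg _)] at h
    exact h.rpow_const (Or.inr hp0)
end

section
/- Let X and Y be real normed spaces, D ⊆ X weakly sequentially closed, F : X → Y weakly sequentially continuous on D, y ∈ Y, and λ > 1. Let δ_k > 0 with δ_k → 0, y_k ∈ Y with ‖y − y_k‖ ≤ δ_k, and let x_k ∈ D satisfy ‖F(x_k) − y_k‖ ≤ λ δ_k for every k. Assume the sequence (x_k) is bounded and that every bounded sequence in D has a weakly convergent subsequence. Then there is a subsequence (x_{k_l}) converging weakly to some x̃ ∈ D with F(x̃) = y. Moreover, if x† is the unique element of D with F(x†) = y, then the whole sequence (x_k) converges weakly to x†. -/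
open Filter Topology

/-- A bounded sequence satisfying the upper discrepancy bound has a subsequence
converging weakly to a solution of `F x = y`; if the solution is unique, the whole
sequence converges weakly to it. -/
theorem stmt_11 {X Y : Type*} [NormedAddCommGroup X] [NormedSpace ℝ X]
    [NormedAddCommGroup Y] [NormedSpace ℝ Y]
    (D : Set X)
    (hDwsc : ∀ (u : ℕ → X) (x : X), (∀ k, u k ∈ D) → WeakTendsto u x → x ∈ D)
    (F : X → Y)
    (hFwc : ∀ (u : ℕ → X) (x : X), (∀ k, u k ∈ D) → x ∈ D → WeakTendsto u x →
      WeakTendsto (fun k => F (u k)) (F x))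
    (y : Y) (lam : ℝ) (hlam : 1 < lam)
    (δ : ℕ → ℝ) (hδpos : ∀ k, 0 < δ k) (hδ0 : Tendsto δ atTop (𝓝 0))
    (yk : ℕ → Y) (hyk : ∀ k, ‖y - yk k‖ ≤ δ k)
    (x : ℕ → X) (hxD : ∀ k, x k ∈ D)
    (hxdisc : ∀ k, ‖F (x k) - yk k‖ ≤ lam * δ k)
    (hxbdd : Bornology.IsBounded (Set.range x))
    (hcpt : ∀ (u : ℕ → X), (∀ k, u k ∈ D) → Bornology.IsBounded (Set.range u) →
      ∃ (φ : ℕ → ℕ) (z : X), StrictMono φ ∧ WeakTendsto (fun l => u (φ l)) z) :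
    (∃ (φ : ℕ → ℕ), StrictMono φ ∧ ∃ xt ∈ D,
      WeakTendsto (fun l => x (φ l)) xt ∧ F xt = y) ∧
    ∀ xdag : X, xdag ∈ D → F xdag = y → (∀ v ∈ D, F v = y → v = xdag) →
      WeakTendsto x xdag := by
  have hF : Tendsto (fun k => F (x k)) atTop (𝓝 y) := by
    rw [tendsto_iff_norm_sub_tendsto_zero]
    have h0 : Tendsto (fun k => (lam + 1) * δ k) atTop (𝓝 0) := by
      simpa using hδ0.const_mul (lam + 1)
    refine squeeze_zero (fun _ => norm_nonneg _) (fun k => ?_) h0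
    have h1 := norm_sub_le_norm_sub_add_norm_sub (F (x k)) (yk k) y
    have h2 := hyk k
    rw [norm_sub_rev] at h2
    linarith [hxdisc k]
  have key : ∀ ψ : ℕ → ℕ, Tendsto ψ atTop atTop → ∃ φ : ℕ → ℕ, StrictMono φ ∧ ∃ xt ∈ D,
      WeakTendsto (fun l => x (ψ (φ l))) xt ∧ F xt = y := by
    intro ψ hψ
    obtain ⟨φ, z, hφ, hz⟩ := hcpt (fun l => x (ψ l)) (fun _ => hxD _)
      (hxbdd.subset (by rintro _ ⟨l, rfl⟩; exact ⟨ψ l, rfl⟩))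
    have hzD := hDwsc _ z (fun _ => hxD _) hz
    refine ⟨φ, hφ, z, hzD, hz, ?_⟩
    have hw := hFwc _ z (fun _ => hxD _) hzD hz
    by_contra hne
    obtain ⟨f, hf⟩ := SeparatingDual.exists_separating_of_ne (R := ℝ) hne
    exact hf (tendsto_nhds_unique (hw f)
      ((f.continuous.tendsto y).comp (hF.comp (hψ.comp hφ.tendsto_atTop))))
  refine ⟨key id tendsto_id, ?_⟩
  intro xdag _ _ huniq f
  refine tendsto_of_subseq_tendsto fun ψ hψ => ?_
  obtain ⟨φ, _, z, hzD, hz, hFz⟩ := key ψ hψ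
  rw [huniq z hzD hFz] at hz
  exact ⟨φ, hz f⟩
end

section
/- Let X and Y be real normed spaces, D ⊆ X weakly sequentially closed, F : X → Y weakly sequentially continuous on D, p ∈ [1, ∞), y ∈ Y, and let f : X → ℝ be nonnegative, coercive and weakly sequentially lower semicontinuous. Assume every bounded sequence in D has a weakly convergent subsequence. Let x† ∈ D be an f-minimizing solution of F(x) = y, let 1 < τ < λ and ε ∈ (0, τ − 1). Let δ_k > 0 with δ_k → 0, y_k ∈ Y with ‖y − y_k‖ ≤ δ_k, α_k > 0, and D_k ⊆ D. For each k let x_k minimize x ↦ ‖F(x) − y_k‖^p + α_k f(x) over D_k and satisfy τδ_k ≤ ‖F(x_k) − y_k‖ ≤ λδ_k, and let x̄_k ∈ D_k satisfy ‖F(x̄_k) − y_k‖ < (τ − ε)δ_k and f(x̄_k) → f(x†). Then (x_k) has a subsequence converging weakly to an f-minimizing solution x̃ of F(x) = y with f(x̃) = f(x†), and δ_k^p / α_k → 0 as k → ∞. -/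
open Filter Topology

/-- Convergence of Tikhonov minimizers chosen by the discrepancy principle:
a subsequence converges weakly to an `f`-minimizing solution with the same penalty
value as `x†`, and `δ_k^p / α_k → 0`. -/
theorem stmt_12 {X Y : Type*} [NormedAddCommGroup X] [NormedSpace ℝ X]
    [NormedAddCommGroup Y] [NormedSpace ℝ Y]
    (D : Set X)
    (hDwsc : ∀ (u : ℕ → X) (x : X), (∀ k, u k ∈ D) → WeakTendsto u x → x ∈ D)
    (F : X → Y)
    (hFwc : ∀ (u : ℕ → X) (x : X), (∀ k, u k ∈ D) → x ∈ D → WeakTendsto u x →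
      WeakTendsto (fun k => F (u k)) (F x))
    (p : ℝ) (hp : 1 ≤ p) (y : Y)
    (f : X → ℝ) (hf0 : ∀ x, 0 ≤ f x)
    (hfcoer : ∀ C : ℝ, Bornology.IsBounded {x : X | f x ≤ C})
    (hfwlsc : ∀ (u : ℕ → X) (x : X), WeakTendsto u x →
      f x ≤ Filter.liminf (fun k => f (u k)) atTop)
    (hcpt : ∀ (u : ℕ → X), (∀ k, u k ∈ D) → Bornology.IsBounded (Set.range u) →
      ∃ (φ : ℕ → ℕ) (z : X), StrictMono φ ∧ WeakTendsto (fun l => u (φ l)) z)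
    (xdag : X) (hxdagD : xdag ∈ D) (hxdagsol : F xdag = y)
    (hxdagmin : ∀ v ∈ D, F v = y → f xdag ≤ f v)
    (τ lam ε : ℝ) (hτ : 1 < τ) (hτlam : τ < lam) (hε : ε ∈ Set.Ioo 0 (τ - 1))
    (δ : ℕ → ℝ) (hδpos : ∀ k, 0 < δ k) (hδ0 : Tendsto δ atTop (𝓝 0))
    (yk : ℕ → Y) (hyk : ∀ k, ‖y - yk k‖ ≤ δ k)
    (α : ℕ → ℝ) (hαpos : ∀ k, 0 < α k)
    (Dk : ℕ → Set X) (hDk : ∀ k, Dk k ⊆ D)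
    (x : ℕ → X)
    (hxmem : ∀ k, x k ∈ Dk k)
    (hxmin : ∀ k, ∀ v ∈ Dk k,
      ‖F (x k) - yk k‖ ^ p + α k * f (x k) ≤ ‖F v - yk k‖ ^ p + α k * f v)
    (hxdisc : ∀ k, τ * δ k ≤ ‖F (x k) - yk k‖ ∧ ‖F (x k) - yk k‖ ≤ lam * δ k)
    (xbar : ℕ → X)
    (hxbarmem : ∀ k, xbar k ∈ Dk k)
    (hxbardisc : ∀ k, ‖F (xbar k) - yk k‖ < (τ - ε) * δ k)
    (hxbarf : Tendsto (fun k => f (xbar k)) atTop (𝓝 (f xdag))) :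
    (∃ (φ : ℕ → ℕ), StrictMono φ ∧ ∃ xt ∈ D,
      WeakTendsto (fun l => x (φ l)) xt ∧ F xt = y ∧
      (∀ v ∈ D, F v = y → f xt ≤ f v) ∧ f xt = f xdag) ∧
    Tendsto (fun k => δ k ^ p / α k) atTop (𝓝 0) := by
  obtain ⟨hε0, hε1⟩ := hε
  have hp0 : 0 < p := by linarith
  have hc : 0 < τ ^ p - (τ - ε) ^ p := by
    have := Real.rpow_lt_rpow (by linarith : 0 ≤ τ - ε) (by linarith : τ - ε < τ) hp0
    linarith
  have hkey : ∀ k, (τ ^ p - (τ - ε) ^ p) * δ k ^ p ≤ α k * (f (xbar k) - f (x k)) := by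
    intro k
    have hd := (hδpos k).le
    have h1 : (τ * δ k) ^ p ≤ ‖F (x k) - yk k‖ ^ p :=
      Real.rpow_le_rpow (mul_nonneg (by linarith) hd) (hxdisc k).1 hp0.le
    have h2 : ‖F (xbar k) - yk k‖ ^ p ≤ ((τ - ε) * δ k) ^ p :=
      Real.rpow_le_rpow (norm_nonneg _) (hxbardisc k).le hp0.le
    rw [Real.mul_rpow (by linarith) hd] at h1 h2
    have h3 := hxmin k _ (hxbarmem k)
    linarith
  have hle : ∀ k, f (x k) ≤ f (xbar k) := by
    intro k
    have h1 := hkey k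
    have h2 : 0 < (τ ^ p - (τ - ε) ^ p) * δ k ^ p :=
      mul_pos hc (Real.rpow_pos_of_pos (hδpos k) p)
    have h3 : 0 < f (xbar k) - f (x k) := pos_of_mul_pos_right (h2.trans_le h1) (hαpos k).le
    linarith
  obtain ⟨C, hC⟩ := hxbarf.bddAbove_range
  have hxC : ∀ k, f (x k) ≤ C := fun k => (hle k).trans (hC ⟨k, rfl⟩)
  have hFx : Tendsto (fun k => F (x k)) atTop (𝓝 y) := by
    rw [tendsto_iff_norm_sub_tendsto_zero]
    have h0 : Tendsto (fun k => (lam + 1) * δ k) atTop (𝓝 0) := by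
      simpa using hδ0.const_mul (lam + 1)
    refine squeeze_zero (fun _ => norm_nonneg _) (fun k => ?_) h0
    have h1 := norm_sub_le_norm_sub_add_norm_sub (F (x k)) (yk k) y
    have h2 := hyk k
    rw [norm_sub_rev] at h2
    have h3 := (hxdisc k).2
    linarith
  have main : ∀ ns : ℕ → ℕ, Tendsto ns atTop atTop → ∃ ms : ℕ → ℕ, StrictMono ms ∧ ∃ xt ∈ D,
      WeakTendsto (fun l => x (ns (ms l))) xt ∧ F xt = y ∧
      (∀ v ∈ D, F v = y → f xt ≤ f v) ∧ f xt = f xdag ∧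
      Tendsto (fun l => f (x (ns (ms l)))) atTop (𝓝 (f xdag)) := by
    intro ns hns
    have hD : ∀ k, x k ∈ D := fun k => hDk k (hxmem k)
    obtain ⟨ms, xt, hms, hw⟩ := hcpt (fun l => x (ns l)) (fun l => hD _)
      ((hfcoer C).subset (by rintro _ ⟨l, rfl⟩; exact hxC _))
    have hxtD : xt ∈ D := hDwsc _ _ (fun l => hD _) hw
    have hT : Tendsto (fun l => ns (ms l)) atTop atTop := hns.comp hms.tendsto_atTop
    have hFxt : F xt = y := by
      refine (SeparatingDual.eq_iff_forall_dual_eq (R := ℝ)).2 fun g => ?_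
      exact tendsto_nhds_unique (hFwc _ _ (fun l => hD _) hxtD hw g)
        ((g.continuous.tendsto y).comp (hFx.comp hT))
    have hbar : Tendsto (fun l => f (xbar (ns (ms l)))) atTop (𝓝 (f xdag)) := hxbarf.comp hT
    have hb1 : IsBoundedUnder (· ≤ ·) atTop (fun l => f (x (ns (ms l)))) :=
      isBoundedUnder_of ⟨C, fun l => hxC _⟩
    have hb2 : IsBoundedUnder (· ≥ ·) atTop (fun l => f (x (ns (ms l)))) :=
      isBoundedUnder_of ⟨0, fun l => hf0 _⟩
    have hls : limsup (fun l => f (x (ns (ms l)))) atTop ≤ f xdag := by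
      rw [← hbar.limsup_eq]
      exact limsup_le_limsup (Eventually.of_forall fun l => hle _) hb2.isCoboundedUnder_le
        hbar.isBoundedUnder_le
    have hli := hfwlsc _ _ hw
    have hll := liminf_le_limsup hb1 hb2
    have hmin := hxdagmin xt hxtD hFxt
    have heq : f xt = f xdag := le_antisymm (hli.trans (hll.trans hls)) hmin
    refine ⟨ms, hms, xt, hxtD, hw, hFxt, fun v hv hFv => heq ▸ hxdagmin v hv hFv, heq, ?_⟩
    exact tendsto_of_le_liminf_of_limsup_le (hmin.trans hli) hls hb1 hb2
  constructor
  · obtain ⟨ms, hms, xt, h1, h2, h3, h4, h5, -⟩ := main id tendsto_id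
    exact ⟨ms, hms, xt, h1, h2, h3, h4, h5⟩
  · have hf : Tendsto (fun k => f (x k)) atTop (𝓝 (f xdag)) := by
      refine tendsto_of_subseq_tendsto fun ns hns => ?_
      obtain ⟨ms, -, xt, -, -, -, -, -, h⟩ := main ns hns
      exact ⟨ms, h⟩
    have h0 : Tendsto (fun k => (f (xbar k) - f (x k)) / (τ ^ p - (τ - ε) ^ p)) atTop (𝓝 0) := by
      simpa using (hxbarf.sub hf).div_const (τ ^ p - (τ - ε) ^ p)
    refine squeeze_zero (fun k => ?_) (fun k => ?_) h0
    · exact div_nonneg (Real.rpow_nonneg (hδpos k).le p) (hαpos k).le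
    · rw [div_le_div_iff₀ (hαpos k) hc]
      have := hkey k
      linarith
end

section
/- Let X and Y be real normed spaces, D ⊆ X, D_m ⊆ D, F : X → Y, y^δ ∈ Y, δ > 0, p ∈ [1, ∞), α > 0, 1 < τ, ε ∈ (0, τ − 1) and ε′ ∈ (ε, τ − 1). Let f : X → ℝ be convex and nonnegative, let x† ∈ D satisfy ‖F(x†) − y^δ‖ ≤ (τ − ε′)δ, and let ξ be a continuous linear functional on X that is a subgradient of f at x†. Define H_m := {v ∈ D_m : ‖F(v) − y^δ‖ < (τ − ε)δ} and assume H_m ≠ ∅, and define κ := inf{ f(v) : v ∈ D, ‖F(v) − y^δ‖ ≤ (τ − ε′)δ }. Suppose inf_{v ∈ H_m} f(v) ≤ κ + ε^p δ^p / α, and suppose x ∈ D_m minimizes T_α(v) = ‖F(v) − y^δ‖^p + α f(v) over D_m and satisfies τδ ≤ ‖F(x) − y^δ‖. Then D_ξ(x, x†) ≤ ξ(x† − x), where D_ξ(u, x†) := f(u) − f(x†) − ξ(u − x†). -/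
/-- Refined Bregman-distance estimate: if the infimum of the penalty over the small
residual set `H_m` nearly attains the continuous threshold value `κ`, then the
Bregman distance of the Tikhonov minimizer is controlled by the subgradient term. -/
theorem stmt_15 {X Y : Type*} [NormedAddCommGroup X] [NormedSpace ℝ X]
    [NormedAddCommGroup Y] [NormedSpace ℝ Y]
    (D : Set X) (Dm : Set X) (hDm : Dm ⊆ D)
    (F : X → Y) (yδ : Y) (δ : ℝ) (hδ : 0 < δ)
    (p : ℝ) (hp : 1 ≤ p) (α : ℝ) (hα : 0 < α)
    (τ ε ε' : ℝ) (hτ : 1 < τ) (hε : ε ∈ Set.Ioo 0 (τ - 1))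
    (hε' : ε' ∈ Set.Ioo ε (τ - 1))
    (f : X → ℝ) (hfconv : ConvexOn ℝ Set.univ f) (hf0 : ∀ x, 0 ≤ f x)
    (xdag : X) (hxdagD : xdag ∈ D)
    (hxdagres : ‖F xdag - yδ‖ ≤ (τ - ε') * δ)
    (ξ : X →L[ℝ] ℝ) (hξ : ∀ u : X, f xdag + ξ (u - xdag) ≤ f u)
    (hHne : {v | v ∈ Dm ∧ ‖F v - yδ‖ < (τ - ε) * δ}.Nonempty)
    (hinf : sInf (f '' {v | v ∈ Dm ∧ ‖F v - yδ‖ < (τ - ε) * δ}) ≤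
      sInf (f '' {v | v ∈ D ∧ ‖F v - yδ‖ ≤ (τ - ε') * δ}) + ε ^ p * δ ^ p / α)
    (x : X) (hxmem : x ∈ Dm)
    (hxmin : ∀ v ∈ Dm, ‖F x - yδ‖ ^ p + α * f x ≤ ‖F v - yδ‖ ^ p + α * f v)
    (hxdisc : τ * δ ≤ ‖F x - yδ‖) :
    f x - f xdag - ξ (x - xdag) ≤ ξ (xdag - x) := by
  obtain ⟨hε0, hε1⟩ := hε
  have hmain : f x + ε ^ p * δ ^ p / α ≤
      sInf (f '' {v | v ∈ Dm ∧ ‖F v - yδ‖ < (τ - ε) * δ}) := by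
    apply le_csInf (hHne.image f)
    rintro _ ⟨v, ⟨hv, hvr⟩, rfl⟩
    have h1 := hxmin v hv
    have hp0 : 0 ≤ p := by linarith
    have h2 : ‖F v - yδ‖ ^ p ≤ ((τ - ε) * δ) ^ p :=
      Real.rpow_le_rpow (norm_nonneg _) hvr.le hp0
    have ha : 0 ≤ (τ - ε) * δ := mul_nonneg (by linarith) hδ.le
    have hb : 0 ≤ ε * δ := mul_nonneg hε0.le hδ.le
    have h3 := Real.add_rpow_le_rpow_add ha hb hp
    have h4 : ((τ - ε) * δ + ε * δ) ^ p ≤ ‖F x - yδ‖ ^ p :=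
      Real.rpow_le_rpow (by linarith) (by linarith) hp0
    rw [Real.mul_rpow hε0.le hδ.le] at h3
    have h5 : ε ^ p * δ ^ p / α ≤ f v - f x := by
      rw [div_le_iff₀ hα]
      linarith
    linarith
  have hk : sInf (f '' {v | v ∈ D ∧ ‖F v - yδ‖ ≤ (τ - ε') * δ}) ≤ f xdag := by
    apply csInf_le
    · refine ⟨0, ?_⟩
      rintro _ ⟨v, _, rfl⟩
      exact hf0 v
    · exact ⟨xdag, ⟨hxdagD, hxdagres⟩, rfl⟩
  have hneg : ξ (xdag - x) = -ξ (x - xdag) := by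
    rw [← map_neg, neg_sub]
  rw [hneg]
  linarith
end

section
/- Let X and Y be real normed spaces, D_m ⊆ X, F : X → Y, y ∈ Y, y^δ ∈ Y with ‖y − y^δ‖ ≤ δ for some δ > 0, p ∈ [1, ∞), α > 0, 1 < τ < λ, ε ∈ (0, τ − 1), and let f : X → ℝ be convex. Let x† satisfy F(x†) = y, suppose F is Fréchet differentiable at x† with derivative F′(x†) : X → Y (a continuous linear map), and suppose there is a continuous linear functional ω : Y → ℝ such that ξ := ω ∘ F′(x†) is a subgradient of f at x† (source condition). Assume there are constants C > 0 and η > 0 with ‖F′(x†)(u − x†)‖ ≤ C ‖F(u) − F(x†)‖ for all u in the ball B(x†, η), and a constant c > 0 such that |f(u) − f(v)| ≤ c ‖u − v‖ for all u, v ∈ B(x†, η). Let x ∈ D_m minimize T_α(v) = ‖F(v) − y^δ‖^p + α f(v) over D_m with τδ ≤ ‖F(x) − y^δ‖ ≤ λδ, and let x̄ ∈ D_m ∩ B(x†, η) with ‖F(x̄) − y^δ‖ < (τ − ε)δ, and assume x ∈ B(x†, η). Then ‖F(x) − y^δ‖ ≤ λδ and D_ξ(x, x†) ≤ c ‖x̄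 − x†‖ + C ‖ω‖ (2τ + λ + 2) δ, where D_ξ(u, x†) := f(u) − f(x†) − ξ(u − x†) and ‖ω‖ is the operator norm of ω. -/
/-- Convergence rates under the classical source condition
`ξ = ω ∘ F'(x†) ∈ ∂f(x†)` and a local tangential-cone-type estimate. -/
theorem stmt_17 {X Y : Type*} [NormedAddCommGroup X] [NormedSpace ℝ X]
    [NormedAddCommGroup Y] [NormedSpace ℝ Y]
    (Dm : Set X) (F : X → Y) (y yδ : Y) (δ : ℝ) (hδ : 0 < δ)
    (hnoise : ‖y - yδ‖ ≤ δ)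
    (p : ℝ) (hp : 1 ≤ p) (α : ℝ) (hα : 0 < α)
    (τ lam ε : ℝ) (hτ : 1 < τ) (hτlam : τ < lam) (hε : ε ∈ Set.Ioo 0 (τ - 1))
    (f : X → ℝ) (hfconv : ConvexOn ℝ Set.univ f)
    (xdag : X) (hxdagsol : F xdag = y)
    (F' : X →L[ℝ] Y) (hF' : HasFDerivAt F F' xdag)
    (ω : Y →L[ℝ] ℝ)
    (hξ : ∀ u : X, f xdag + (ω.comp F') (u - xdag) ≤ f u)
    (C η : ℝ) (hC : 0 < C) (hη : 0 < η)
    (htc : ∀ u ∈ Metric.ball xdag η, ‖F' (u - xdag)‖ ≤ C * ‖F u - F xdag‖)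
    (c : ℝ) (hc : 0 < c)
    (hlip : ∀ u ∈ Metric.ball xdag η, ∀ v ∈ Metric.ball xdag η,
      |f u - f v| ≤ c * ‖u - v‖)
    (x : X) (hxmem : x ∈ Dm)
    (hxmin : ∀ v ∈ Dm, ‖F x - yδ‖ ^ p + α * f x ≤ ‖F v - yδ‖ ^ p + α * f v)
    (hxdisc : τ * δ ≤ ‖F x - yδ‖ ∧ ‖F x - yδ‖ ≤ lam * δ)
    (hxball : x ∈ Metric.ball xdag η)
    (xbar : X) (hxbarmem : xbar ∈ Dm) (hxbarball : xbar ∈ Metric.ball xdag η)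
    (hxbardisc : ‖F xbar - yδ‖ < (τ - ε) * δ) :
    ‖F x - yδ‖ ≤ lam * δ ∧
    f x - f xdag - (ω.comp F') (x - xdag) ≤
      c * ‖xbar - xdag‖ + C * ‖ω‖ * (2 * τ + lam + 2) * δ := by
  refine ⟨hxdisc.2, ?_⟩
  have hε0 := hε.1
  have h1 : ‖F xbar - yδ‖ ≤ ‖F x - yδ‖ := by nlinarith [hxdisc.1]
  have h2 : ‖F xbar - yδ‖ ^ p ≤ ‖F x - yδ‖ ^ p :=
    Real.rpow_le_rpow (norm_nonneg _) h1 (by linarith)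
  have h3 : f x ≤ f xbar := by
    have := hxmin xbar hxbarmem
    exact le_of_mul_le_mul_left (by linarith) hα
  have h4 : f xbar - f xdag ≤ c * ‖xbar - xdag‖ :=
    (le_abs_self _).trans (hlip xbar hxbarball xdag (Metric.mem_ball_self hη))
  have h5 : ‖F x - F xdag‖ ≤ (lam + 1) * δ := by
    have : ‖F x - F xdag‖ ≤ ‖F x - yδ‖ + ‖y - yδ‖ := by
      rw [hxdagsol, norm_sub_rev y yδ]
      exact norm_sub_le_norm_sub_add_norm_sub _ _ _
    linarith [hxdisc.2]
  have h6 : -(ω.comp F') (x - xdag) ≤ ‖ω‖ * ‖F' (x - xdag)‖ :=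
    (neg_le_abs _).trans (ω.le_opNorm (F' (x - xdag)))
  have h7 : ‖ω‖ * ‖F' (x - xdag)‖ ≤ ‖ω‖ * (C * ((2 * τ + lam + 2) * δ)) := by
    refine mul_le_mul_of_nonneg_left ((htc x hxball).trans ?_) (norm_nonneg _)
    refine mul_le_mul_of_nonneg_left (h5.trans ?_) hC.le
    exact mul_le_mul_of_nonneg_right (by linarith) hδ.le
  have h8 : ‖ω‖ * (C * ((2 * τ + lam + 2) * δ)) = C * ‖ω‖ * (2 * τ + lam + 2) * δ := by ring
  linarith
end

section
/- Let X and Y be real normed spaces, D_m ⊆ X, F : X → Y, y ∈ Y, y^δ ∈ Y with ‖y − y^δ‖ ≤ δ for some δ > 0, p ∈ [1, ∞), α > 0, 1 < τ₁ ≤ τ₂, and γ ≥ 0. Let f : X → ℝ be convex, let x† satisfy F(x†) = y, and let ξ be a continuous linear functional on X that is a subgradient of f at x†; write D_ξ(u, x†) := f(u) − f(x†) − ξ(u − x†). Let z ∈ D_m with ‖F(z) − y^δ‖ ≤ δ + γ, and set η := D_ξ(z, x†) and φ := ‖z − x†‖. Let β₁ ∈ [0, 1) and β₂ ≥ 0 and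 assume ξ(x† − x) ≤ β₁ D_ξ(x, x†) + β₂ ‖F(x) − F(x†)‖, where x ∈ D_m minimizes T_α(v) = ‖F(v) − y^δ‖^p + α f(v) over D_m and satisfies τ₁(δ + γ) ≤ ‖F(x) − y^δ‖ ≤ τ₂(δ + γ). Then ‖F(x) − y^δ‖ ≤ τ₂(δ + γ) and D_ξ(x, x†) ≤ (η + ‖ξ‖ φ + β₂ (τ₂ + 1)(δ + γ)) / (1 − β₁), where ‖ξ‖ is the operator norm of ξ. -/
/-- Explicit convergence-rate estimate under the discrete Morozov principle:
the Bregman distance of the Tikhonov minimizer is controlled by the discretization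
quantities `η = D_ξ(z, x†)`, `φ = ‖z − x†‖` and by the noise/discretization level. -/
theorem stmt_19 {X Y : Type*} [NormedAddCommGroup X] [NormedSpace ℝ X]
    [NormedAddCommGroup Y] [NormedSpace ℝ Y]
    (Dm : Set X) (F : X → Y) (y yδ : Y) (δ : ℝ) (hδ : 0 < δ)
    (hnoise : ‖y - yδ‖ ≤ δ)
    (p : ℝ) (hp : 1 ≤ p) (α : ℝ) (hα : 0 < α)
    (τ₁ τ₂ : ℝ) (hτ₁ : 1 < τ₁) (hτ₁₂ : τ₁ ≤ τ₂)
    (γ : ℝ) (hγ : 0 ≤ γ)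
    (f : X → ℝ) (hfconv : ConvexOn ℝ Set.univ f)
    (xdag : X) (hxdagsol : F xdag = y)
    (ξ : X →L[ℝ] ℝ) (hξ : ∀ u : X, f xdag + ξ (u - xdag) ≤ f u)
    (z : X) (hzmem : z ∈ Dm) (hzres : ‖F z - yδ‖ ≤ δ + γ)
    (β₁ β₂ : ℝ) (hβ₁ : β₁ ∈ Set.Ico 0 1) (hβ₂ : 0 ≤ β₂)
    (x : X) (hxmem : x ∈ Dm)
    (hxmin : ∀ v ∈ Dm, ‖F x - yδ‖ ^ p + α * f x ≤ ‖F v - yδ‖ ^ p + α * f v)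
    (hxdisc : τ₁ * (δ + γ) ≤ ‖F x - yδ‖ ∧ ‖F x - yδ‖ ≤ τ₂ * (δ + γ))
    (hVI : ξ (xdag - x) ≤ β₁ * (f x - f xdag - ξ (x - xdag)) + β₂ * ‖F x - F xdag‖) :
    ‖F x - yδ‖ ≤ τ₂ * (δ + γ) ∧
    f x - f xdag - ξ (x - xdag) ≤
      ((f z - f xdag - ξ (z - xdag)) + ‖ξ‖ * ‖z - xdag‖ +
        β₂ * (τ₂ + 1) * (δ + γ)) / (1 - β₁) := by
  refine ⟨hxdisc.2, ?_⟩
  have hle : ‖F z - yδ‖ ≤ ‖F x - yδ‖ := by nlinarith [hxdisc.1]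
  have hpow : ‖F z - yδ‖ ^ p ≤ ‖F x - yδ‖ ^ p :=
    Real.rpow_le_rpow (norm_nonneg _) hle (by linarith)
  have hf : f x ≤ f z := by
    have h1 := hxmin z hzmem
    exact le_of_mul_le_mul_left (by linarith) hα
  have hop : ξ (z - xdag) ≤ ‖ξ‖ * ‖z - xdag‖ :=
    (le_abs_self _).trans (ξ.le_opNorm _)
  have hres : ‖F x - F xdag‖ ≤ (τ₂ + 1) * (δ + γ) := by
    have h1 := norm_sub_le_norm_sub_add_norm_sub (F x) yδ (F xdag)
    rw [norm_sub_rev yδ, hxdagsol] at h1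
    rw [hxdagsol]
    linarith [hxdisc.2]
  have hneg : ξ (xdag - x) = - ξ (x - xdag) := by
    rw [← map_neg, neg_sub]
  have hmul := mul_le_mul_of_nonneg_left hres hβ₂
  rw [le_div_iff₀ (by linarith [hβ₁.2])]
  rw [hneg] at hVI
  linarith
end
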